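/- Let s be an even integer with s ≥ 6, N ≥ 2s, ν ≥ π, and let C ⊂ SO(3) be a finite set with separation distance ρ(C) ≥ ν/(N+1). Let x_j ∈ C, 0 ≤ ε ≤ 1/2, and x ∈ SO(3) with d(x,x_j) ≤ εν/(N+1); set a_ε = min{(27/124)(1−ε)^{−s} + 1, (1−ε)^{−s}}. Then, with all sums over x_i ∈ C \ {x_j} and all indices ranging over {1,2,3}: Σ|σ_N(x,x_i)| ≤ C_{0,s}a_ε/ν^s; Σ|X_n^y σ_N(x,x_i)| ≤ C_{1,s}a_ε(N+1)/ν^s; Σ|X_i^x X_n^y σ_N(x,x_i)| ≤ C_{2,s}a_ε(N+1)²/ν^s; Σ|X_i^x X_i^x X_n^y σ_N(x,x_i)| ≤ 1.2·C_{3,s}a_ε(N+1)³/ν^s; and for i,j,n pairwise distinct: Σ|X_j^x X_i^x σ_N(x,x_i) − (ε_{jin}/2)X_n^x σ_N(x,x_i)| ≤ C_{2,s}a_ε(N+1)²/ν^s and, for each k ∈ {i,j,n}, Σ|X_j^x X_i^x X_k^y σ_N(x,x_i) − (ε_{jin}/2)X_n^x X_k^y σ_N(x,x_i)| ≤ 1.2·C_{3,s}a_ε(N+1)³/ν^s.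 -/

import Mathlib

noncomputable section

abbrev Mat3 := Matrix (Fin 3) (Fin 3) ℝ

/-- membership in SO(3) -/
def IsSO3 (x : Mat3) : Prop := x.transpose * x = 1 ∧ x.det = 1

/-- rotation angle -/
def rotAngle (x : Mat3) : ℝ := Real.arccos ((Matrix.trace x - 1) / 2)

/-- generators of so(3) -/
def Lgen : Fin 3 → Mat3 :=
  ![!![0, 0, 0; 0, 0, -1; 0, 1, 0],
    !![0, 0, 1; 0, 0, 0; -1, 0, 0],
    !![0, -1, 0; 1, 0, 0; 0, 0, 0]]

/-- derivative in the first variable along generator `i` -/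
def Xx (i : Fin 3) (f : Mat3 → Mat3 → ℝ) : Mat3 → Mat3 → ℝ :=
  fun x y => deriv (fun t : ℝ => f (x * NormedSpace.exp (t • Lgen i)) y) 0

/-- derivative in the second variable along generator `i` -/
def Xy (i : Fin 3) (f : Mat3 → Mat3 → ℝ) : Mat3 → Mat3 → ℝ :=
  fun x y => deriv (fun t : ℝ => f x (y * NormedSpace.exp (t • Lgen i))) 0

/-- iterated integrals of the sign of the Chebyshev polynomial: the perfect B-spline chain -/
def fspline (s : ℕ) : ℕ → ℝ → ℝ
  | 0 => fun x => (-1 : ℝ) ^ (s - 1) * Real.sign ((Polynomial.Chebyshev.U ℝ ((s : ℤ) - 1)).eval x)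
  | (k + 1) => fun x => ∫ t in (-1 : ℝ)..x, fspline s k t

/-- the scaled perfect B-spline g̃_{s-1} -/
def gtilde (s : ℕ) (x : ℝ) : ℝ := fspline s (s - 1) (2 * x)

/-- discrete norm ‖g̃‖_{1,N} -/
def gnorm (s N : ℕ) : ℝ :=
  ∑ k ∈ Finset.Icc (-(N : ℤ)) (N : ℤ), gtilde s ((k : ℝ) / (2 * ((N : ℝ) + 1)))

/-- the trigonometric kernel σ̃_N (real-valued) -/
def sigmaT (s N : ℕ) (t : ℝ) : ℝ :=
  ((1 / (gnorm s N : ℂ)) *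
      ∑ k ∈ Finset.Icc (-(N : ℤ)) (N : ℤ),
        (gtilde s ((k : ℝ) / (2 * ((N : ℝ) + 1))) : ℂ) * Complex.exp ((k : ℂ) * t * Complex.I)).re

/-- the zonal kernel σ_N on SO(3) -/
def sigmaK (s N : ℕ) (x y : Mat3) : ℝ := sigmaT s N (rotAngle (y⁻¹ * x))

/-- rotation axis components -/
def axisComp : Fin 3 → Mat3 → ℝ :=
  ![fun x => (x 2 1 - x 1 2) / (2 * Real.sin (rotAngle x)),
    fun x => (x 0 2 - x 2 0) / (2 * Real.sin (rotAngle x)),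
    fun x => (x 1 0 - x 0 1) / (2 * Real.sin (rotAngle x))]

/-- Levi-Civita symbol on `Fin 3` -/
def eps3 (a b c : Fin 3) : ℝ :=
  if (a, b, c) = (0, 1, 2) ∨ (a, b, c) = (1, 2, 0) ∨ (a, b, c) = (2, 0, 1) then 1
  else if (a, b, c) = (2, 1, 0) ∨ (a, b, c) = (1, 0, 2) ∨ (a, b, c) = (0, 2, 1) then -1
  else 0

/-- constants c_{l,s} -/
def cConst : ℕ → ℕ → ℝ
  | 0, s => 1.02 * (Nat.factorial (s - 1)) * 2 ^ s * s
  | 1, s => 1.02 * (Nat.factorial (s - 1)) * 2 ^ s * (2 * s)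
  | 2, s => 1.02 * (Nat.factorial (s - 1)) * 2 ^ s * (4 * s + 1)
  | _, s => 1.02 * (Nat.factorial (s - 1)) * 2 ^ s * (9 * s - 2)

/-- ζ(m) for natural m -/
def zetaNat (m : ℕ) : ℝ := ∑' n : ℕ, (1 : ℝ) / ((n : ℝ) + 1) ^ m

/-- constants C_{i,s} = 124 c_{i,s} ζ(s-2) -/
def CConst (i s : ℕ) : ℝ := 124 * cConst i s * zetaNat (s - 2)

end

open scoped Real

open MeasureTheory Polynomial

/-!
The derivative of order `s - 1` of the perfect spline is, up to a sign, the sign of `U_{s-1}`, whose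
weak derivative on the line is an alternating sum of point masses at the extremal points
`-cos (k π / s)` of the Chebyshev polynomial `T_s`. That sum annihilates polynomials of degree less
than `s`, so the iterated antiderivatives vanish at both ends and `s` integrations by parts make the
Fourier transform of the spline, and of its products with small powers of the variable, decay like
`|ξ| ^ (-s)`. By Poisson summation, sampling adds only aliasing terms, which cost one percent of the
discrete norm when `N ≥ 2 s`: hence `sigmaT` and its first three derivatives decay like
`((N + 1) t) ^ (-s)` on `(0, π]`.

On the rotation group `sigmaK` is a polynomial in the trace of `y⁻¹ x`, so its invariant derivatives
are polynomials in the entries of that rotation. In axis-angle coordinates they are combinations of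
the radial derivatives, the lower-order ones weighted by half-cotangents of `t / 2`, and
`(N + 1) t ≥ π / 2` keeps each of these weights below a multiple of `N + 1`.

Finally, relative to the point `x` rotations are represented by vectors of length at most `π` in
Euclidean space. Positive curvature makes distances between these vectors at least the rotation
angles, so a separated set of rotations becomes a separated set of vectors. Disjoint balls around
them bound their number in each shell, and summing the decay over the shells gives the zeta value.
-/

/-! ### The perfect spline on its pieces -/

/-- The knots `-cos (k π / s)`, `0 ≤ k ≤ s`, of the perfect spline, in increasing order. -/
noncomputable def splineNode (s k : ℕ) : ℝ := -Real.cos (k * (π / s))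

section Nodes

variable {s k : ℕ}

lemma splineNode_zero (s : ℕ) : splineNode s 0 = -1 := by simp [splineNode]

lemma splineNode_self (hs : 0 < s) : splineNode s s = 1 := by
  rw [splineNode, mul_div_cancel₀ _ (by positivity : (s : ℝ) ≠ 0), Real.cos_pi, neg_neg]

lemma abs_splineNode_le_one (s k : ℕ) : |splineNode s k| ≤ 1 := by
  rw [splineNode, abs_neg]
  exact Real.abs_cos_le_one _

lemma nodeAngle_mem_Icc (hs : 0 < s) (hk : k ≤ s) : (k : ℝ) * (π / s) ∈ Set.Icc 0 π := by
  have hks : (k : ℝ) ≤ s := by exact_mod_cast hk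
  refine ⟨by positivity, ?_⟩
  calc (k : ℝ) * (π / s) ≤ s * (π / s) := by gcongr
    _ = π := mul_div_cancel₀ _ (by positivity)

lemma splineNode_lt_succ (hk : k < s) : splineNode s k < splineNode s (k + 1) := by
  have hs : 0 < s := by omega
  refine neg_lt_neg (Real.strictAntiOn_cos (nodeAngle_mem_Icc hs hk.le)
    (nodeAngle_mem_Icc hs hk) ?_)
  gcongr
  exact k.lt_succ_self

lemma exists_mem_piece (hs : 0 < s) {x : ℝ} (hx : x ∈ Set.Icc (-1 : ℝ) 1) :
    ∃ k < s, x ∈ Set.Icc (splineNode s k) (splineNode s (k + 1)) := by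
  by_contra! h
  have hle : ∀ k < s, splineNode s k ≤ x := by
    intro k hk
    induction k with
    | zero => rw [splineNode_zero]; exact hx.1
    | succ k ih =>
      by_contra! hlt
      exact h k (by omega) ⟨ih (by omega), hlt.le⟩
  refine h (s - 1) (by omega) ⟨hle _ (by omega), ?_⟩
  rw [Nat.sub_add_cancel hs, splineNode_self hs]
  exact hx.2

lemma exists_angle_of_mem_piece (hk : k < s) {x : ℝ}
    (hx : x ∈ Set.Ioo (splineNode s k) (splineNode s (k + 1))) :
    ∃ φ ∈ Set.Ioo (k * (π / s)) ((k + 1 : ℕ) * (π / s)), x = -Real.cos φ := by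
  have hs : 0 < s := by omega
  have hk0 := nodeAngle_mem_Icc hs hk.le
  have hk1 := nodeAngle_mem_Icc hs hk
  obtain ⟨hx0, hx1⟩ := hx
  rw [splineNode] at hx0 hx1
  have hle := Real.cos_le_one (k * (π / s))
  have hge := Real.neg_one_le_cos ((k + 1 : ℕ) * (π / s))
  refine ⟨Real.arccos (-x), ⟨?_, ?_⟩, ?_⟩
  · rw [← Real.arccos_cos hk0.1 hk0.2]
    exact Real.arccos_lt_arccos (by linarith) (by linarith) hle
  · rw [← Real.arccos_cos hk1.1 hk1.2]
    exact Real.arccos_lt_arccos hge (by linarith) (by linarith)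
  · rw [Real.cos_arccos (by linarith) (by linarith), neg_neg]

lemma sin_mul_eval_U_neg_cos (hs : 0 < s) (φ : ℝ) :
    eval (-Real.cos φ) (Chebyshev.U ℝ ((s : ℤ) - 1)) * Real.sin φ =
      (-1) ^ (s - 1) * Real.sin (s * φ) := by
  have h := Chebyshev.U_real_cos (π - φ) ((s : ℤ) - 1)
  rw [Real.cos_pi_sub, Real.sin_pi_sub] at h
  rw [h, show ((((s : ℤ) - 1 : ℤ) : ℝ) + 1) * (π - φ) = s * π - s * φ by push_cast; ring,
    Real.sin_nat_mul_pi_sub]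
  obtain ⟨r, rfl⟩ := Nat.exists_eq_succ_of_ne_zero hs.ne'
  rw [Nat.succ_sub_one, pow_succ]
  ring

lemma sign_eq_neg_one_pow {r : ℝ} {n : ℕ} (h : 0 < (-1) ^ n * r) : Real.sign r = (-1) ^ n := by
  rcases neg_one_pow_eq_or ℝ n with hn | hn <;> rw [hn] at h ⊢
  · exact Real.sign_of_pos (by linarith)
  · exact Real.sign_of_neg (by linarith)

lemma neg_one_pow_mul_sin_pos (hs : 0 < s) {φ : ℝ}
    (hφ : φ ∈ Set.Ioo (k * (π / s)) ((k + 1 : ℕ) * (π / s))) :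
    0 < (-1) ^ k * Real.sin (s * φ) := by
  have hsR : (0 : ℝ) < s := by exact_mod_cast hs
  have hlo := mul_lt_mul_of_pos_left hφ.1 hsR
  have hhi := mul_lt_mul_of_pos_left hφ.2 hsR
  rw [show (s : ℝ) * (k * (π / s)) = k * π by field_simp] at hlo
  rw [show (s : ℝ) * ((k + 1 : ℕ) * (π / s)) = k * π + π by push_cast; field_simp] at hhi
  rw [← Real.sin_sub_nat_mul_pi]
  exact Real.sin_pos_of_pos_of_lt_pi (by linarith) (by linarith)

lemma fspline_zero_of_mem_piece (hk : k < s) {x : ℝ}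
    (hx : x ∈ Set.Ioo (splineNode s k) (splineNode s (k + 1))) : fspline s 0 x = (-1) ^ k := by
  have hs : 0 < s := by omega
  obtain ⟨φ, hφ, rfl⟩ := exists_angle_of_mem_piece hk hx
  have hsin : 0 < Real.sin φ := Real.sin_pos_of_pos_of_lt_pi
    ((nodeAngle_mem_Icc hs hk.le).1.trans_lt hφ.1) (hφ.2.trans_le (nodeAngle_mem_Icc hs hk).2)
  have hsign : 0 < (-1 : ℝ) ^ (k + (s - 1)) *
      eval (-Real.cos φ) (Chebyshev.U ℝ ((s : ℤ) - 1)) := by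
    refine pos_of_mul_pos_left ?_ hsin.le
    rw [mul_assoc, sin_mul_eval_U_neg_cos hs, pow_add, mul_assoc, ← mul_assoc (_ ^ (s - 1)),
      ← mul_pow, neg_one_mul, neg_neg, one_pow, one_mul]
    exact neg_one_pow_mul_sin_pos hs hφ
  simp only [fspline]
  rw [sign_eq_neg_one_pow hsign, pow_add, mul_left_comm, ← mul_pow, neg_one_mul, neg_neg,
    one_pow, mul_one]

end Nodes

section Regularity

lemma measurable_fspline_zero (s : ℕ) : Measurable (fspline s 0) := by
  have hsign : Measurable Real.sign := by
    unfold Real.sign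
    exact Measurable.ite measurableSet_Iio measurable_const
      (Measurable.ite measurableSet_Ioi measurable_const measurable_const)
  unfold fspline
  exact (hsign.comp (Polynomial.continuous _).measurable).const_mul _

lemma abs_fspline_zero_le (s : ℕ) (x : ℝ) : |fspline s 0 x| ≤ 1 := by
  rw [fspline, abs_mul, abs_neg_one_pow, one_mul]
  rcases Real.sign_apply_eq (eval x (Chebyshev.U ℝ ((s : ℤ) - 1))) with h | h | h <;> simp [h]

lemma intervalIntegrable_fspline_zero (s : ℕ) (a b : ℝ) :
    IntervalIntegrable (fspline s 0) volume a b := by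
  refine (intervalIntegrable_const (c := (1 : ℝ))).mono_fun
    (measurable_fspline_zero s).aestronglyMeasurable (ae_of_all _ fun x => ?_)
  simpa using abs_fspline_zero_le s x

lemma continuous_fspline_succ (s k : ℕ) : Continuous (fspline s (k + 1)) := by
  induction k with
  | zero => exact intervalIntegral.continuous_primitive (intervalIntegrable_fspline_zero s) _
  | succ k ih =>
    exact intervalIntegral.continuous_primitive (fun a b => ih.intervalIntegrable a b) _

lemma intervalIntegrable_fspline (s k : ℕ) (a b : ℝ) :
    IntervalIntegrable (fspline s k) volume a b := by
  cases k with
  | zero => exact intervalIntegrable_fspline_zero s a b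
  | succ k => exact (continuous_fspline_succ s k).intervalIntegrable a b

lemma intervalIntegrable_fspline_smul {E : Type*} [NormedAddCommGroup E] [NormedSpace ℝ E]
    (s k : ℕ) {ψ : ℝ → E} (hψ : Continuous ψ) (a b : ℝ) :
    IntervalIntegrable (fun x => fspline s k x • ψ x) volume a b :=
  (intervalIntegrable_fspline s k a b).smul_continuousOn hψ.continuousOn

lemma intervalIntegrable_fspline_mul_eval (s k : ℕ) (p : ℝ[X]) (a b : ℝ) :
    IntervalIntegrable (fun x => fspline s k x * eval x p) volume a b :=
  intervalIntegrable_fspline_smul s k p.continuous a b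

lemma fspline_succ_neg_one (s k : ℕ) : fspline s (k + 1) (-1) = 0 := by
  simp [fspline]

lemma fspline_succ_sub (s k : ℕ) (a b : ℝ) :
    fspline s (k + 1) b - fspline s (k + 1) a = ∫ x in a..b, fspline s k x :=
  intervalIntegral.integral_interval_sub_left (intervalIntegrable_fspline s k _ _)
    (intervalIntegrable_fspline s k _ _)

lemma continuousAt_fspline_zero {s : ℕ} {x : ℝ}
    (hx : eval x (Chebyshev.U ℝ ((s : ℤ) - 1)) ≠ 0) : ContinuousAt (fspline s 0) x := by
  have hU : ContinuousAt (fun y => eval y (Chebyshev.U ℝ ((s : ℤ) - 1))) x :=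
    (Polynomial.continuous _).continuousAt
  have hsign : ContinuousAt Real.sign (eval x (Chebyshev.U ℝ ((s : ℤ) - 1))) := by
    rcases lt_or_gt_of_ne hx with h | h
    · exact continuousAt_const.congr ((eventually_lt_nhds h).mono
        fun _ hy => (Real.sign_of_neg hy).symm)
    · exact continuousAt_const.congr ((eventually_gt_nhds h).mono
        fun _ hy => (Real.sign_of_pos hy).symm)
  unfold fspline
  exact (ContinuousAt.comp (f := fun y => eval y _) hsign hU).const_mul _

lemma hasDerivAt_fspline_succ {s : ℕ} (k : ℕ) {x : ℝ}
    (hx : eval x (Chebyshev.U ℝ ((s : ℤ) - 1)) ≠ 0) :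
    HasDerivAt (fspline s (k + 1)) (fspline s k x) x := by
  cases k with
  | zero =>
    exact intervalIntegral.integral_hasDerivAt_right (intervalIntegrable_fspline_zero s _ _)
      (measurable_fspline_zero s).stronglyMeasurable.stronglyMeasurableAtFilter
      (continuousAt_fspline_zero hx)
  | succ k =>
    have hc := continuous_fspline_succ s k
    exact intervalIntegral.integral_hasDerivAt_right (hc.intervalIntegrable _ _)
      hc.stronglyMeasurable.stronglyMeasurableAtFilter hc.continuousAt

lemma chebyshev_U_pred_ne_zero {s : ℕ} (hs : 0 < s) : Chebyshev.U ℝ ((s : ℤ) - 1) ≠ 0 := by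
  rw [← Nat.cast_pred hs]
  intro h
  have hdeg := Chebyshev.degree_U_natCast ℝ (s - 1)
  simp [h] at hdeg

end Regularity

/-! ### Orthogonality relations -/

section Orthogonality

variable {E : Type*} [NormedAddCommGroup E] [NormedSpace ℝ E] {s k : ℕ}

lemma integral_fspline_succ_smul_deriv [CompleteSpace E] (hs : 0 < s)
    (h1 : fspline s (k + 1) 1 = 0) {ψ ψ' : ℝ → E}
    (hψ : ∀ x, HasDerivAt ψ (ψ' x) x) (hψ' : Continuous ψ') :
    ∫ x in (-1 : ℝ)..1, fspline s (k + 1) x • ψ' x = -∫ x in (-1 : ℝ)..1, fspline s k x • ψ x := by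
  have hψc : Continuous ψ := continuous_iff_continuousAt.mpr fun x => (hψ x).continuousAt
  have hi1 := intervalIntegrable_fspline_smul s (k + 1) hψ' (-1) 1
  have hi2 := intervalIntegrable_fspline_smul s k hψc (-1) 1
  have hzeros : {x | eval x (Chebyshev.U ℝ ((s : ℤ) - 1)) = 0}.Countable :=
    ((Chebyshev.U ℝ ((s : ℤ) - 1)).roots.toFinset.finite_toSet.subset fun x hx => by
      simpa [chebyshev_U_pred_ne_zero hs] using hx).countable
  have h := integral_eq_of_hasDerivAt_off_countable (a := -1) (b := 1)
    (fun x => fspline s (k + 1) x • ψ x)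
    (fun x => fspline s (k + 1) x • ψ' x + fspline s k x • ψ x) hzeros
    ((continuous_fspline_succ s k).smul hψc).continuousOn
    (fun x hx => (hasDerivAt_fspline_succ k hx.2).smul (hψ x)) (hi1.add hi2)
  rw [intervalIntegral.integral_add hi1 hi2, h1, fspline_succ_neg_one, zero_smul, zero_smul,
    sub_zero] at h
  exact eq_neg_of_add_eq_zero_left h

lemma integral_fspline_zero_smul_deriv [CompleteSpace E] (hs : 0 < s) {ψ ψ' : ℝ → E}
    (hψ : ∀ x, HasDerivAt ψ (ψ' x) x) (hψ' : Continuous ψ') :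
    ∫ x in (-1 : ℝ)..1, fspline s 0 x • ψ' x =
      ∑ k ∈ Finset.range s, (-1 : ℝ) ^ k • (ψ (splineNode s (k + 1)) - ψ (splineNode s k)) := by
  have h := intervalIntegral.sum_integral_adjacent_intervals (a := splineNode s) (n := s)
    (fun k _ => intervalIntegrable_fspline_smul s 0 hψ' (splineNode s k) (splineNode s (k + 1)))
  rw [splineNode_zero, splineNode_self hs] at h
  rw [← h]
  refine Finset.sum_congr rfl fun k hk => ?_
  have hks := Finset.mem_range.mp hk
  rw [intervalIntegral.integral_congr_Ioo_of_le (g := fun x => (-1 : ℝ) ^ k • ψ' x)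
    (splineNode_lt_succ hks).le (fun x hx => by simp only [fspline_zero_of_mem_piece hks hx]),
    intervalIntegral.integral_smul,
    intervalIntegral.integral_eq_sub_of_hasDerivAt (fun x _ => hψ x) (hψ'.intervalIntegrable _ _)]

lemma sum_neg_one_pow_mul_sin (a : ℝ) (n : ℕ) :
    (∑ k ∈ Finset.range n, (-1 : ℝ) ^ k * Real.sin ((2 * k + 1) * a)) * (2 * Real.cos a) =
      -(-1) ^ n * Real.sin (2 * n * a) := by
  induction n with
  | zero => simp
  | succ n ih =>
    rw [Finset.sum_range_succ, add_mul, ih,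
      show 2 * ((n + 1 : ℕ) : ℝ) * a = (2 * n + 1) * a + a by push_cast; ring,
      show 2 * (n : ℝ) * a = (2 * n + 1) * a - a by ring, Real.sin_add, Real.sin_sub, pow_succ]
    ring

lemma eval_T_splineNode (s m k : ℕ) :
    eval (splineNode s k) (Chebyshev.T ℝ m) = (-1) ^ m * Real.cos (m * (k * (π / s))) := by
  rw [splineNode, ← Real.cos_pi_sub, Chebyshev.T_real_cos, ← Real.cos_nat_mul_pi_sub, mul_sub,
    Int.cast_natCast]

lemma integral_fspline_zero_mul_U (hs : 0 < s) (m : ℕ) :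
    ((m + 1 : ℕ) : ℝ) * ∫ x in (-1 : ℝ)..1, fspline s 0 x * eval x (Chebyshev.U ℝ m) =
      (-1) ^ m * (2 * Real.sin ((m + 1 : ℕ) * π / (2 * s))) * ∑ k ∈ Finset.range s,
        (-1 : ℝ) ^ k * Real.sin ((2 * k + 1) * ((m + 1 : ℕ) * π / (2 * s))) := by
  have hsR : (s : ℝ) ≠ 0 := by positivity
  have h := integral_fspline_zero_smul_deriv hs
    (fun x => (Chebyshev.T ℝ ((m + 1 : ℕ) : ℤ)).hasDerivAt x) (Polynomial.continuous _)
  rw [← intervalIntegral.integral_const_mul, Finset.mul_sum]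
  convert h using 1
  · refine intervalIntegral.integral_congr fun x _ => ?_
    simp only [Chebyshev.T_derivative_eq_U, show ((m + 1 : ℕ) : ℤ) - 1 = m by push_cast; ring,
      Int.cast_natCast, eval_mul, eval_natCast, smul_eq_mul]
    ring
  · refine Finset.sum_congr rfl fun k _ => ?_
    rw [eval_T_splineNode, eval_T_splineNode, smul_eq_mul, ← mul_sub, Real.cos_sub_cos,
      show (((m + 1 : ℕ) : ℝ) * ((k + 1 : ℕ) * (π / s)) + (m + 1 : ℕ) * (k * (π / s))) / 2 =
        (2 * k + 1) * ((m + 1 : ℕ) * π / (2 * s)) by push_cast; field_simp; ring,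
      show (((m + 1 : ℕ) : ℝ) * ((k + 1 : ℕ) * (π / s)) - (m + 1 : ℕ) * (k * (π / s))) / 2 =
        ((m + 1 : ℕ) * π / (2 * s)) by push_cast; field_simp; ring, pow_succ]
    ring

lemma integral_fspline_zero_mul_U_of_lt {m : ℕ} (hm : m + 1 < s) :
    ∫ x in (-1 : ℝ)..1, fspline s 0 x * eval x (Chebyshev.U ℝ m) = 0 := by
  have hs : 0 < s := by omega
  have hm' : ((m + 1 : ℕ) : ℝ) < s := by exact_mod_cast hm
  have hcos : 0 < Real.cos (((m + 1 : ℕ) : ℝ) * π / (2 * s)) := by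
    refine Real.cos_pos_of_mem_Ioo ⟨(neg_lt_zero.mpr (by positivity)).trans_le
      (by positivity : 0 ≤ ((m + 1 : ℕ) : ℝ) * π / (2 * s)), ?_⟩
    rw [div_lt_div_iff₀ (by positivity) (by norm_num)]
    nlinarith [Real.pi_pos]
  have hsum := sum_neg_one_pow_mul_sin (((m + 1 : ℕ) : ℝ) * π / (2 * s)) s
  rw [show 2 * (s : ℝ) * ((m + 1 : ℕ) * π / (2 * s)) = (m + 1 : ℕ) * π by field_simp,
    Real.sin_nat_mul_pi, mul_zero] at hsum
  have h := integral_fspline_zero_mul_U hs m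
  rw [(mul_eq_zero.mp hsum).resolve_right (by positivity), mul_zero] at h
  exact (mul_eq_zero.mp h).resolve_left (by positivity)

lemma integral_fspline_zero_mul_U_pred (hs : 0 < s) :
    ∫ x in (-1 : ℝ)..1, fspline s 0 x * eval x (Chebyshev.U ℝ ((s - 1 : ℕ) : ℤ)) =
      (-1) ^ (s - 1) * 2 := by
  have hsR : (s : ℝ) ≠ 0 := by positivity
  have h := integral_fspline_zero_mul_U hs (s - 1)
  have hterm : ∀ k ∈ Finset.range s, (-1 : ℝ) ^ k * Real.sin ((2 * k + 1) * (π / 2)) = 1 := by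
    intro k _
    rw [show (2 * (k : ℝ) + 1) * (π / 2) = π / 2 + k * π by ring, Real.sin_add_nat_mul_pi,
      Real.sin_pi_div_two, mul_one, ← mul_pow, neg_one_mul, neg_neg, one_pow]
  rw [Nat.sub_add_cancel hs, show (s : ℝ) * π / (2 * s) = π / 2 by field_simp,
    Finset.sum_congr rfl hterm, Real.sin_pi_div_two, Finset.sum_const, Finset.card_range,
    nsmul_eq_mul, mul_one, mul_one, mul_comm] at h
  exact mul_right_cancel₀ hsR h

lemma degree_sub_C_mul_U_lt {n : ℕ} {p : ℝ[X]} (hp : p.degree ≤ n) :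
    (p - C (p.coeff n / 2 ^ n) * Chebyshev.U ℝ n).degree < n := by
  have hU : (Chebyshev.U ℝ n).coeff n = 2 ^ n := by
    have h := Chebyshev.leadingCoeff_U_natCast ℝ n
    rwa [leadingCoeff, Chebyshev.natDegree_U_natCast] at h
  rw [degree_lt_iff_coeff_zero]
  intro m hm
  rw [coeff_sub, coeff_C_mul]
  rcases hm.eq_or_lt with rfl | hm
  · rw [hU, div_mul_cancel₀ _ (by positivity), sub_self]
  · have hnm : (n : WithBot ℕ) < m := by exact_mod_cast hm
    rw [coeff_eq_zero_of_degree_lt (hp.trans_lt hnm),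
      coeff_eq_zero_of_degree_lt ((Chebyshev.degree_U_natCast ℝ n).le.trans_lt hnm), mul_zero,
      sub_zero]

lemma integral_fspline_zero_mul_eval_eq_add (s n : ℕ) (p : ℝ[X]) :
    ∫ x in (-1 : ℝ)..1, fspline s 0 x * eval x p =
      (∫ x in (-1 : ℝ)..1, fspline s 0 x *
        eval x (p - C (p.coeff n / 2 ^ n) * Chebyshev.U ℝ n)) +
      p.coeff n / 2 ^ n * ∫ x in (-1 : ℝ)..1, fspline s 0 x * eval x (Chebyshev.U ℝ n) := by
  rw [← intervalIntegral.integral_const_mul, ← intervalIntegral.integral_add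
    (intervalIntegrable_fspline_mul_eval s 0 _ _ _)
    ((intervalIntegrable_fspline_mul_eval s 0 _ _ _).const_mul _)]
  congr 1
  ext x
  simp only [eval_sub, eval_mul, eval_C]
  ring

lemma integral_fspline_zero_mul_eval_eq_zero {n : ℕ} (hn : n < s) {p : ℝ[X]} (hp : p.degree < n) :
    ∫ x in (-1 : ℝ)..1, fspline s 0 x * eval x p = 0 := by
  induction n generalizing p with
  | zero => simp [show p = 0 by simpa using hp]
  | succ n ih =>
    rw [integral_fspline_zero_mul_eval_eq_add s n,
      ih (by omega) (degree_sub_C_mul_U_lt (Order.lt_succ_iff.mp hp)),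
      integral_fspline_zero_mul_U_of_lt hn, mul_zero, add_zero]

lemma integral_fspline_zero_mul_pow_pred (hs : 0 < s) :
    ∫ x in (-1 : ℝ)..1, fspline s 0 x * x ^ (s - 1) = (-1) ^ (s - 1) * (2 / 2 ^ (s - 1)) := by
  have h := integral_fspline_zero_mul_eval_eq_add s (s - 1) (X ^ (s - 1))
  rw [integral_fspline_zero_mul_eval_eq_zero (Nat.sub_lt hs one_pos)
    (degree_sub_C_mul_U_lt (by simp)), integral_fspline_zero_mul_U_pred hs] at h
  simp only [eval_pow, eval_X, coeff_X_pow_self] at h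
  rw [h]
  ring

lemma factorial_mul_integral_fspline_of_forall (hs : 0 < s)
    (h1 : ∀ j < k, fspline s (j + 1) 1 = 0) :
    (k.factorial : ℝ) * ∫ x in (-1 : ℝ)..1, fspline s k x =
      (-1) ^ k * ∫ x in (-1 : ℝ)..1, fspline s 0 x * x ^ k := by
  suffices h : ∀ j ≤ k, ∫ x in (-1 : ℝ)..1, fspline s j x * eval x (derivative^[j] (X ^ k)) =
      (-1) ^ j * ∫ x in (-1 : ℝ)..1, fspline s 0 x * x ^ k by
    simpa [iterate_derivative_X_pow_eq_natCast_mul, Nat.descFactorial_self, mul_comm]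
      using h k le_rfl
  intro j hj
  induction j with
  | zero => simp
  | succ j ih =>
    have h := integral_fspline_succ_smul_deriv hs (h1 j hj)
      (fun x => (derivative^[j] (X ^ k : ℝ[X])).hasDerivAt x) (Polynomial.continuous _)
    simp only [smul_eq_mul, ← Function.iterate_succ_apply' derivative] at h
    rw [h, ih (by omega), pow_succ]
    ring

lemma fspline_succ_one (hk : k + 1 < s) : fspline s (k + 1) 1 = 0 := by
  induction k using Nat.strong_induction_on with
  | _ k ih =>
    have h := factorial_mul_integral_fspline_of_forall (s := s) (k := k) (by omega)
      fun j hj => ih j hj (by omega)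
    have horth := integral_fspline_zero_mul_eval_eq_zero hk (p := X ^ k)
      (by rw [degree_X_pow]; exact_mod_cast k.lt_succ_self)
    simp only [eval_pow, eval_X] at horth
    rw [horth, mul_zero] at h
    exact (mul_eq_zero.mp h).resolve_left (by positivity)

lemma integral_fspline_pred (hs : 0 < s) :
    ∫ x in (-1 : ℝ)..1, fspline s (s - 1) x = 2 / (2 ^ (s - 1) * ((s - 1).factorial : ℝ)) := by
  have h := factorial_mul_integral_fspline_of_forall (k := s - 1) hs
    fun j hj => fspline_succ_one (by omega)
  rw [integral_fspline_zero_mul_pow_pred hs, ← mul_assoc, ← mul_pow, neg_one_mul, neg_neg, one_pow,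
    one_mul] at h
  rw [← div_div, eq_div_iff (by positivity), mul_comm, h]

end Orthogonality

/-! ### Sup-norm bounds for the low-order splines -/

/-- The zero of `fspline s 1` between the knots `splineNode s k` and `splineNode s (k + 1)`. -/
noncomputable def splineZero (s k : ℕ) : ℝ :=
  splineNode s k + Real.tan (π / s / 2) * Real.sin (k * (π / s))

section Pieces

variable {s k : ℕ} {x : ℝ}

lemma sin_nodeAngle_nonneg (hs : 0 < s) (hk : k ≤ s) : 0 ≤ Real.sin (k * (π / s)) :=
  Real.sin_nonneg_of_nonneg_of_le_pi (nodeAngle_mem_Icc hs hk).1 (nodeAngle_mem_Icc hs hk).2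

lemma halfAngle_mem_Ico (hs : 2 ≤ s) : π / s / 2 ∈ Set.Ico 0 (π / 2) := by
  have hs2 : (2 : ℝ) ≤ s := by exact_mod_cast hs
  have h : π / s ≤ π / 2 := by gcongr
  exact ⟨by positivity, by linarith [Real.pi_pos]⟩

lemma tan_halfAngle_nonneg (hs : 2 ≤ s) : 0 ≤ Real.tan (π / s / 2) :=
  Real.tan_nonneg_of_nonneg_of_le_pi_div_two (halfAngle_mem_Ico hs).1 (halfAngle_mem_Ico hs).2.le

lemma splineNode_succ (hs : 2 ≤ s) (k : ℕ) : splineNode s (k + 1) =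
    splineZero s k + Real.tan (π / s / 2) * Real.sin ((k + 1 : ℕ) * (π / s)) := by
  have hcos : 0 < Real.cos (π / s / 2) := Real.cos_pos_of_mem_Ioo
    ⟨by linarith [Real.pi_pos, (halfAngle_mem_Ico hs).1], (halfAngle_mem_Ico hs).2⟩
  unfold splineZero splineNode
  set β := π / s
  rw [show (k : ℝ) * β = (2 * k + 1) * (β / 2) - β / 2 by ring,
    show ((k + 1 : ℕ) : ℝ) * β = (2 * k + 1) * (β / 2) + β / 2 by push_cast; ring,
    Real.cos_add, Real.cos_sub, Real.sin_add, Real.sin_sub, Real.tan_eq_sin_div_cos]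
  field_simp
  ring

lemma abs_sub_splineZero_le (hs : 2 ≤ s)
    (hx : x ∈ Set.Icc (splineNode s k) (splineNode s (k + 1))) :
    |x - splineZero s k| ≤ Real.tan (π / s / 2) := by
  have ht := tan_halfAngle_nonneg hs
  obtain ⟨hx0, hx1⟩ := hx
  have hle := mul_le_of_le_one_right ht (Real.sin_le_one (k * (π / s)))
  have hle' := mul_le_of_le_one_right ht (Real.sin_le_one ((k + 1 : ℕ) * (π / s)))
  rw [splineNode_succ hs] at hx1
  rw [abs_le]
  unfold splineZero at hx1 ⊢
  constructor <;> linarith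

lemma fspline_succ_eq_of_mem_piece {j : ℕ} {F G : ℕ → ℝ → ℝ}
    (hF : ∀ k < s, ∀ x ∈ Set.Ioo (splineNode s k) (splineNode s (k + 1)), fspline s j x = F k x)
    (hFc : ∀ k, Continuous (F k)) (hG : ∀ k x, HasDerivAt (G k) (F k x) x) (h0 : G 0 (-1) = 0)
    (hmatch : ∀ k, G (k + 1) (splineNode s (k + 1)) = G k (splineNode s (k + 1))) (hk : k < s)
    (hx : x ∈ Set.Icc (splineNode s k) (splineNode s (k + 1))) :
    fspline s (j + 1) x = G k x := by
  have hpiece : ∀ k < s, ∀ x ∈ Set.Icc (splineNode s k) (splineNode s (k + 1)),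
      fspline s (j + 1) x - fspline s (j + 1) (splineNode s k) = G k x - G k (splineNode s k) := by
    intro k hks x hx
    rw [fspline_succ_sub, intervalIntegral.integral_congr_Ioo_of_le hx.1
      fun y hy => hF k hks y ⟨hy.1, hy.2.trans_le hx.2⟩,
      intervalIntegral.integral_eq_sub_of_hasDerivAt (fun y _ => hG k y)
        ((hFc k).intervalIntegrable _ _)]
  have hnode : ∀ k < s, fspline s (j + 1) (splineNode s k) = G k (splineNode s k) := by
    intro k hks
    induction k with
    | zero => rw [splineNode_zero, fspline_succ_neg_one, h0]
    | succ k ih =>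
      have h := hpiece k (by omega) _ ⟨(splineNode_lt_succ (by omega)).le, le_rfl⟩
      rw [ih (by omega), sub_left_inj] at h
      rw [h, hmatch]
  linarith [hpiece k hk x hx, hnode k hk]

lemma fspline_one_of_mem_piece (hs : 2 ≤ s) (hk : k < s)
    (hx : x ∈ Set.Icc (splineNode s k) (splineNode s (k + 1))) :
    fspline s 1 x = (-1) ^ k * (x - splineZero s k) := by
  refine fspline_succ_eq_of_mem_piece (F := fun k _ => (-1) ^ k)
    (G := fun k x => (-1) ^ k * (x - splineZero s k))
    (fun k hk x hx => fspline_zero_of_mem_piece hk hx) (fun k => continuous_const) (fun k x => ?_)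
    (by simp [splineZero, splineNode_zero]) (fun k => ?_) hk hx
  · simpa using ((hasDerivAt_id x).sub_const (splineZero s k)).const_mul ((-1 : ℝ) ^ k)
  · rw [splineZero, sub_add_cancel_left, splineNode_succ hs, pow_succ]
    ring

lemma fspline_two_of_mem_piece (hs : 2 ≤ s) (hcos : Real.cos (π / s) ≠ 0) (hk : k < s)
    (hx : x ∈ Set.Icc (splineNode s k) (splineNode s (k + 1))) :
    fspline s 2 x = (-1) ^ k * (((x - splineZero s k) ^ 2 - Real.tan (π / s / 2) ^ 2 *
      (Real.sin (k * (π / s)) * Real.sin ((k + 1 : ℕ) * (π / s))) / Real.cos (π / s)) / 2) := by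
  refine fspline_succ_eq_of_mem_piece (F := fun k x => (-1) ^ k * (x - splineZero s k))
    (G := fun k x => (-1) ^ k * (((x - splineZero s k) ^ 2 - Real.tan (π / s / 2) ^ 2 *
      (Real.sin (k * (π / s)) * Real.sin ((k + 1 : ℕ) * (π / s))) / Real.cos (π / s)) / 2))
    (fun k hk x hx => fspline_one_of_mem_piece hs hk (Set.Ioo_subset_Icc_self hx))
    (fun k => by fun_prop) (fun k x => ?_)
    (by simp [splineZero, splineNode_zero]) (fun k => ?_) hk hx
  · refine (((((hasDerivAt_id x).sub_const (splineZero s k)).pow 2).sub_const _).div_const 2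
      |>.const_mul ((-1 : ℝ) ^ k)).congr_deriv ?_
    simp
  · have hsin : Real.sin (k * (π / s)) + Real.sin ((k + 1 + 1 : ℕ) * (π / s)) =
        2 * Real.sin ((k + 1 : ℕ) * (π / s)) * Real.cos (π / s) := by
      rw [show (k : ℝ) * (π / s) = (k + 1 : ℕ) * (π / s) - π / s by push_cast; ring,
        show ((k + 1 + 1 : ℕ) : ℝ) * (π / s) = (k + 1 : ℕ) * (π / s) + π / s by push_cast; ring,
        Real.sin_add, Real.sin_sub]
      ring
    rw [splineZero, sub_add_cancel_left, splineNode_succ hs, add_sub_cancel_left, pow_succ]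
    have hsum : Real.sin (k * (π / s)) * Real.sin ((k + 1 : ℕ) * (π / s)) / Real.cos (π / s) +
        Real.sin ((k + 1 : ℕ) * (π / s)) * Real.sin ((k + 1 + 1 : ℕ) * (π / s)) / Real.cos (π / s) =
        2 * Real.sin ((k + 1 : ℕ) * (π / s)) ^ 2 := by
      rw [← add_div, div_eq_iff hcos]
      linear_combination Real.sin ((k + 1 : ℕ) * (π / s)) * hsin
    linear_combination (-1) ^ k * Real.tan (π / s / 2) ^ 2 / 2 * hsum

lemma abs_fspline_one_le_tan (hs : 2 ≤ s) (hx : x ∈ Set.Icc (-1 : ℝ) 1) :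
    |fspline s 1 x| ≤ Real.tan (π / s / 2) := by
  obtain ⟨k, hk, hxk⟩ := exists_mem_piece (s := s) (by omega) hx
  rw [fspline_one_of_mem_piece hs hk hxk, abs_mul, abs_neg_one_pow, one_mul]
  exact abs_sub_splineZero_le hs hxk

lemma abs_fspline_two_le_tan (hs : 2 ≤ s) (hcos : 0 < Real.cos (π / s))
    (hx : x ∈ Set.Icc (-1 : ℝ) 1) :
    |fspline s 2 x| ≤ Real.tan (π / s / 2) ^ 2 / Real.cos (π / s) / 2 := by
  obtain ⟨k, hk, hxk⟩ := exists_mem_piece (s := s) (by omega) hx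
  have hsq : (x - splineZero s k) ^ 2 ≤ Real.tan (π / s / 2) ^ 2 :=
    sq_le_sq.mpr ((abs_sub_splineZero_le hs hxk).trans (le_abs_self _))
  have hsin := mul_le_one₀ (Real.sin_le_one (k * (π / s)))
    (sin_nodeAngle_nonneg (by omega) hk) (Real.sin_le_one ((k + 1 : ℕ) * (π / s)))
  have hsin0 := mul_nonneg (sin_nodeAngle_nonneg (by omega) hk.le)
    (sin_nodeAngle_nonneg (s := s) (by omega) hk)
  rw [fspline_two_of_mem_piece hs hcos.ne' hk hxk, abs_mul, abs_neg_one_pow, one_mul, abs_div,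
    abs_two]
  gcongr
  refine abs_sub_le_of_nonneg_of_le (sq_nonneg _)
    (hsq.trans (le_div_self (sq_nonneg _) hcos (Real.cos_le_one _))) (by positivity) ?_
  gcongr
  exact mul_le_of_le_one_right (sq_nonneg _) hsin

lemma le_cos_of_sq_le {c x : ℝ} (h : x ^ 2 ≤ 2 * (1 - c)) : c ≤ Real.cos x :=
  (by linarith : c ≤ 1 - x ^ 2 / 2).trans Real.one_sub_sq_div_two_le_cos

lemma pi_div_le_of_six_le (hs : 6 ≤ s) : π / s ≤ 0.5236 := by
  have hsR : (6 : ℝ) ≤ s := by exact_mod_cast hs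
  calc π / s ≤ 3.1416 / 6 := by gcongr; linarith [Real.pi_lt_d4]
    _ = 0.5236 := by norm_num

lemma tan_halfAngle_le (hs : 6 ≤ s) : Real.tan (π / s / 2) ≤ 1.63 / s := by
  have hβ := pi_div_le_of_six_le hs
  have hβ0 : 0 ≤ π / s := by positivity
  have hcos : 0.9655 ≤ Real.cos (π / s / 2) := le_cos_of_sq_le (by nlinarith)
  calc Real.tan (π / s / 2) = Real.sin (π / s / 2) / Real.cos (π / s / 2) :=
        Real.tan_eq_sin_div_cos _
    _ ≤ π / s / 2 / 0.9655 := div_le_div₀ (by positivity) (Real.sin_le (by positivity))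
        (by norm_num) hcos
    _ = π / 2 / 0.9655 / s := by ring
    _ ≤ 1.63 / s := by
        gcongr
        rw [div_div, div_le_iff₀ (by norm_num)]
        linarith [Real.pi_lt_d4]

lemma abs_fspline_one_le (hs : 6 ≤ s) (hx : x ∈ Set.Icc (-1 : ℝ) 1) :
    |fspline s 1 x| ≤ 1.63 / s :=
  (abs_fspline_one_le_tan (by omega) hx).trans (tan_halfAngle_le hs)

lemma abs_fspline_two_le (hs : 6 ≤ s) (hx : x ∈ Set.Icc (-1 : ℝ) 1) :
    |fspline s 2 x| ≤ 1.74 / s ^ 2 := by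
  have hβ := pi_div_le_of_six_le hs
  have hβ0 : 0 ≤ π / s := by positivity
  have hcos : 0.862 ≤ Real.cos (π / s) := le_cos_of_sq_le (by nlinarith)
  have ht0 := tan_halfAngle_nonneg (s := s) (by omega)
  calc |fspline s 2 x| ≤ Real.tan (π / s / 2) ^ 2 / Real.cos (π / s) / 2 :=
        abs_fspline_two_le_tan (by omega) (by linarith) hx
    _ ≤ (1.63 / s) ^ 2 / 0.862 / 2 := by gcongr; exact tan_halfAngle_le hs
    _ = 1.63 ^ 2 / 0.862 / 2 / s ^ 2 := by ring
    _ ≤ 1.74 / s ^ 2 := by gcongr; norm_num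

end Pieces

/-! ### Decay of the Fourier transform of the spline -/

/-- The Fourier integral of `x ^ l * fspline s k x` over `[-1, 1]`. -/
noncomputable def splineFourier (s l k : ℕ) (ξ : ℝ) : ℂ :=
  ∫ x in (-1 : ℝ)..1, fspline s k x • ((x : ℂ) ^ l * Complex.exp (x * ξ * Complex.I))

section FourierDecay

variable {s k l m : ℕ} {ξ : ℝ}

lemma hasDerivAt_pow_mul_exp (l : ℕ) (ξ x : ℝ) :
    HasDerivAt (fun y : ℝ => (y : ℂ) ^ l * Complex.exp (y * ξ * Complex.I))
      (l * ((x : ℂ) ^ (l - 1) * Complex.exp (x * ξ * Complex.I)) +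
        ξ * Complex.I * ((x : ℂ) ^ l * Complex.exp (x * ξ * Complex.I))) x := by
  have h : HasDerivAt (fun y : ℂ => y ^ l * Complex.exp (y * ξ * Complex.I))
      (l * (x : ℂ) ^ (l - 1) * Complex.exp (x * ξ * Complex.I) +
        (x : ℂ) ^ l * (Complex.exp (x * ξ * Complex.I) * (1 * ξ * Complex.I))) x :=
    (hasDerivAt_pow l (x : ℂ)).mul ((((hasDerivAt_id (x : ℂ)).mul_const _).mul_const _).cexp)
  convert h.comp_ofReal using 1
  ring

lemma norm_pow_mul_exp (l : ℕ) (ξ x : ℝ) :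
    ‖(x : ℂ) ^ l * Complex.exp (x * ξ * Complex.I)‖ = |x| ^ l := by
  rw [norm_mul, ← Complex.ofReal_mul, Complex.norm_exp_ofReal_mul_I, mul_one, norm_pow,
    Complex.norm_real, Real.norm_eq_abs]

lemma abs_mul_norm_splineFourier_le (s l k : ℕ) (ξ : ℝ) :
    |ξ| * ‖splineFourier s l k ξ‖ ≤
      ‖∫ x in (-1 : ℝ)..1, fspline s k x • (l * ((x : ℂ) ^ (l - 1) *
        Complex.exp (x * ξ * Complex.I)) +
          ξ * Complex.I * ((x : ℂ) ^ l * Complex.exp (x * ξ * Complex.I)))‖ +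
        l * ‖splineFourier s (l - 1) k ξ‖ := by
  have hsplit : ∫ x in (-1 : ℝ)..1, fspline s k x • (l * ((x : ℂ) ^ (l - 1) *
      Complex.exp (x * ξ * Complex.I)) +
        ξ * Complex.I * ((x : ℂ) ^ l * Complex.exp (x * ξ * Complex.I))) =
      l * splineFourier s (l - 1) k ξ + ξ * Complex.I * splineFourier s l k ξ := by
    unfold splineFourier
    rw [← intervalIntegral.integral_const_mul, ← intervalIntegral.integral_const_mul,
      ← intervalIntegral.integral_add
        ((intervalIntegrable_fspline_smul s k (by fun_prop) _ _).const_mul _)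
        ((intervalIntegrable_fspline_smul s k (by fun_prop) _ _).const_mul _)]
    congr 1
    funext x
    simp only [Complex.real_smul]
    ring
  rw [hsplit]
  calc |ξ| * ‖splineFourier s l k ξ‖ = ‖(l * splineFourier s (l - 1) k ξ +
        ξ * Complex.I * splineFourier s l k ξ) - l * splineFourier s (l - 1) k ξ‖ := by
        simp
    _ ≤ _ := by
        refine (norm_sub_le _ _).trans_eq ?_
        rw [norm_mul (l : ℂ), Complex.norm_natCast]

lemma abs_mul_norm_splineFourier_succ_le (hk : k + 1 < s) (l : ℕ) (ξ : ℝ) :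
    |ξ| * ‖splineFourier s l (k + 1) ξ‖ ≤
      ‖splineFourier s l k ξ‖ + l * ‖splineFourier s (l - 1) (k + 1) ξ‖ := by
  have h := abs_mul_norm_splineFourier_le s l (k + 1) ξ
  rwa [integral_fspline_succ_smul_deriv (by omega) (fspline_succ_one hk)
    (hasDerivAt_pow_mul_exp l ξ) (by fun_prop), norm_neg] at h

lemma abs_mul_norm_splineFourier_zero_le (hs : 0 < s) (l : ℕ) (ξ : ℝ) :
    |ξ| * ‖splineFourier s l 0 ξ‖ ≤ 2 * s + l * ‖splineFourier s (l - 1) 0 ξ‖ := by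
  have h := abs_mul_norm_splineFourier_le s l 0 ξ
  rw [integral_fspline_zero_smul_deriv hs (hasDerivAt_pow_mul_exp l ξ) (by fun_prop)] at h
  have hnode (k : ℕ) : ‖(splineNode s k : ℂ) ^ l *
      Complex.exp (splineNode s k * ξ * Complex.I)‖ ≤ 1 := by
    rw [norm_pow_mul_exp]
    exact pow_le_one₀ (abs_nonneg _) (abs_splineNode_le_one s k)
  refine h.trans (add_le_add_left ((norm_sum_le_of_le (n := fun _ => 2) _ fun k _ => ?_).trans_eq
    (by simp [mul_comm])) _)
  rw [norm_smul, norm_pow, norm_neg, norm_one, one_pow, one_mul]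
  refine (norm_sub_le _ _).trans ?_
  linarith [hnode k, hnode (k + 1)]

lemma pow_mul_norm_splineFourier_add_le {a : ℕ} {b : ℝ} {u : ℕ → ℝ}
    (hb : |ξ| ^ a * ‖splineFourier s l m ξ‖ ≤ b)
    (hu : ∀ j < k, |ξ| ^ (j + a) * ‖splineFourier s (l - 1) (j + m + 1) ξ‖ ≤ u j)
    (hk : k + m < s) :
    |ξ| ^ (k + a) * ‖splineFourier s l (k + m) ξ‖ ≤ b + l * ∑ j ∈ Finset.range k, u j := by
  induction k with
  | zero => simpa using hb
  | succ k ih =>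
    rw [Nat.add_right_comm] at hk
    rw [Nat.add_right_comm, Nat.add_right_comm k 1 m]
    calc |ξ| ^ (k + a + 1) * ‖splineFourier s l (k + m + 1) ξ‖
        = |ξ| ^ (k + a) * (|ξ| * ‖splineFourier s l (k + m + 1) ξ‖) := by
          rw [pow_succ, mul_assoc]
      _ ≤ |ξ| ^ (k + a) * (‖splineFourier s l (k + m) ξ‖ +
          l * ‖splineFourier s (l - 1) (k + m + 1) ξ‖) := by
          gcongr
          exact abs_mul_norm_splineFourier_succ_le hk l ξ
      _ = |ξ| ^ (k + a) * ‖splineFourier s l (k + m) ξ‖ +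
          l * (|ξ| ^ (k + a) * ‖splineFourier s (l - 1) (k + m + 1) ξ‖) := by ring
      _ ≤ b + l * ∑ j ∈ Finset.range k, u j + l * u k := by
          gcongr
          · exact ih (fun j hj => hu j (by omega)) (by omega)
          · exact hu k k.lt_succ_self
      _ = b + l * ∑ j ∈ Finset.range (k + 1), u j := by rw [Finset.sum_range_succ]; ring

lemma integral_abs_pow (l : ℕ) : ∫ x in (-1 : ℝ)..1, |x| ^ l = 2 / (l + 1) := by
  have habs (a b : ℝ) : IntervalIntegrable (fun x : ℝ => |x| ^ l) volume a b :=
    Continuous.intervalIntegrable (by fun_prop) _ _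
  have hpos : ∫ x in (0 : ℝ)..1, |x| ^ l = 1 / (l + 1) := by
    rw [intervalIntegral.integral_congr (g := fun x => x ^ l)]
    · simp
    · intro x hx
      rw [Set.uIcc_of_le zero_le_one] at hx
      simp only [abs_of_nonneg hx.1]
  have hneg : ∫ x in (-1 : ℝ)..0, |x| ^ l = 1 / (l + 1) := by
    have h := intervalIntegral.integral_comp_neg (a := 0) (b := 1) (fun x : ℝ => |x| ^ l)
    simp only [abs_neg, neg_zero] at h
    rw [← h, hpos]
  rw [← intervalIntegral.integral_add_adjacent_intervals (habs _ 0) (habs _ _), hpos, hneg]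
  ring

lemma norm_splineFourier_le {b : ℝ} (hb : ∀ x ∈ Set.Icc (-1 : ℝ) 1, |fspline s k x| ≤ b)
    (l : ℕ) (ξ : ℝ) : ‖splineFourier s l k ξ‖ ≤ b * (2 / (l + 1)) := by
  have h : ∀ x ∈ Set.Ioc (-1 : ℝ) 1,
      ‖fspline s k x • ((x : ℂ) ^ l * Complex.exp (x * ξ * Complex.I))‖ ≤ b * |x| ^ l := by
    intro x hx
    rw [norm_smul, norm_pow_mul_exp]
    exact mul_le_mul_of_nonneg_right (hb x (Set.Ioc_subset_Icc_self hx)) (by positivity)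
  rw [← integral_abs_pow, ← intervalIntegral.integral_const_mul]
  exact intervalIntegral.norm_integral_le_of_norm_le (by norm_num) (ae_of_all _ h)
    (Continuous.intervalIntegrable (by fun_prop) _ _)

lemma sum_range_cast (k : ℕ) : ∑ j ∈ Finset.range k, (j : ℝ) = k * (k - 1) / 2 := by
  induction k with
  | zero => simp
  | succ k ih => rw [Finset.sum_range_succ, ih]; push_cast; ring

lemma sum_range_cast_mul_pred (k : ℕ) :
    ∑ j ∈ Finset.range k, (j : ℝ) * (j - 1) = k * (k - 1) * (k - 2) / 3 := by
  induction k with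
  | zero => simp
  | succ k ih => rw [Finset.sum_range_succ, ih]; push_cast; ring

section Bounds

variable {b c d : ℝ}

lemma pow_mul_norm_splineFourier_zero_le
    (hb : ∀ x ∈ Set.Icc (-1 : ℝ) 1, |fspline s m x| ≤ b) (hk : k + m < s) :
    |ξ| ^ k * ‖splineFourier s 0 (k + m) ξ‖ ≤ 2 * b := by
  have h := pow_mul_norm_splineFourier_add_le (a := 0) (l := 0) (ξ := ξ)
    (by simpa using norm_splineFourier_le hb 0 ξ) (fun _ _ => le_rfl) hk
  simpa [mul_comm b] using h

lemma pow_mul_norm_splineFourier_one_le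
    (hb : ∀ x ∈ Set.Icc (-1 : ℝ) 1, |fspline s m x| ≤ b)
    (hc : ∀ x ∈ Set.Icc (-1 : ℝ) 1, |fspline s (m + 1) x| ≤ c) (hk : k + m < s) :
    |ξ| ^ k * ‖splineFourier s 1 (k + m) ξ‖ ≤ b + 2 * k * c := by
  have h := pow_mul_norm_splineFourier_add_le (a := 0) (l := 1) (ξ := ξ) (b := b)
    (u := fun _ => 2 * c)
    (by simpa [show (1 : ℝ) + 1 = 2 by norm_num] using norm_splineFourier_le hb 1 ξ)
    (fun j hj => by
      simpa [add_assoc] using pow_mul_norm_splineFourier_zero_le (k := j) hc (by omega)) hk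
  rw [add_zero] at h
  refine h.trans_eq ?_
  simp only [Finset.sum_const, Finset.card_range, nsmul_eq_mul]
  push_cast
  ring

lemma pow_mul_norm_splineFourier_two_le
    (hb : ∀ x ∈ Set.Icc (-1 : ℝ) 1, |fspline s m x| ≤ b)
    (hc : ∀ x ∈ Set.Icc (-1 : ℝ) 1, |fspline s (m + 1) x| ≤ c)
    (hd : ∀ x ∈ Set.Icc (-1 : ℝ) 1, |fspline s (m + 2) x| ≤ d) (hk : k + m < s) :
    |ξ| ^ k * ‖splineFourier s 2 (k + m) ξ‖ ≤ 2 / 3 * b + 2 * k * c + 2 * (k * (k - 1)) * d := by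
  have h := pow_mul_norm_splineFourier_add_le (a := 0) (l := 2) (ξ := ξ) (b := b * (2 / (2 + 1)))
    (u := fun j => c + 2 * j * d) (by simpa using norm_splineFourier_le hb 2 ξ)
    (fun j hj => by
      simpa [add_assoc] using pow_mul_norm_splineFourier_one_le (k := j) hc hd (by omega)) hk
  rw [add_zero, Finset.sum_add_distrib, ← Finset.sum_mul, ← Finset.mul_sum, sum_range_cast] at h
  refine h.trans_eq ?_
  simp only [Finset.sum_const, Finset.card_range, nsmul_eq_mul]
  push_cast
  ring

lemma pow_mul_norm_splineFourier_pred_le_add_sum (hs : 0 < s) {u : ℕ → ℝ}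
    (hu : ∀ j < s, |ξ| ^ j * ‖splineFourier s (l - 1) j ξ‖ ≤ u j) :
    |ξ| ^ s * ‖splineFourier s l (s - 1) ξ‖ ≤ 2 * s + l * ∑ j ∈ Finset.range s, u j := by
  have hzero : |ξ| ^ 1 * ‖splineFourier s l 0 ξ‖ ≤ 2 * s + l * u 0 := by
    have h := hu 0 hs
    rw [pow_zero, one_mul] at h
    rw [pow_one]
    refine (abs_mul_norm_splineFourier_zero_le hs l ξ).trans ?_
    gcongr
  have h := pow_mul_norm_splineFourier_add_le (k := s - 1) (u := fun j => u (j + 1)) hzero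
    (fun j hj => hu (j + 1) (by omega)) (by omega)
  obtain ⟨r, rfl⟩ := Nat.exists_eq_succ_of_ne_zero hs.ne'
  rw [Nat.succ_sub_one, add_zero] at h
  rw [Finset.sum_range_succ', Nat.succ_sub_one, mul_add, ← add_assoc, add_right_comm]
  exact h

end Bounds

/-- The bound on `|ξ| ^ s * ‖splineFourier s l (s - 1) ξ‖` for `l ≤ 3`, divided by `s`. -/
noncomputable def decayConst : ℕ → ℝ
  | 0 => 2
  | 1 => 4
  | 2 => 7.26
  | _ => 12.37

lemma decayConst_nonneg (l : ℕ) : 0 ≤ decayConst l := by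
  unfold decayConst
  split <;> norm_num

lemma pow_mul_norm_splineFourier_two_pred_le (hs : 6 ≤ s) (ξ : ℝ) :
    |ξ| ^ s * ‖splineFourier s 2 (s - 1) ξ‖ ≤ 7.26 * s := by
  have h := pow_mul_norm_splineFourier_pred_le_add_sum (l := 2) (by omega : 0 < s) fun j hj =>
    pow_mul_norm_splineFourier_one_le (ξ := ξ) (fun x _ => abs_fspline_zero_le s x)
      (fun x hx => abs_fspline_one_le hs hx) hj
  rw [Finset.sum_add_distrib, ← Finset.sum_mul, ← Finset.mul_sum, sum_range_cast] at h
  refine h.trans ?_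
  simp only [Finset.sum_const, Finset.card_range, nsmul_eq_mul, Nat.cast_ofNat, mul_one]
  field_simp
  linarith

lemma pow_mul_norm_splineFourier_three_pred_le (hs : 6 ≤ s) (ξ : ℝ) :
    |ξ| ^ s * ‖splineFourier s 3 (s - 1) ξ‖ ≤ 12.37 * s := by
  have hsR : (6 : ℝ) ≤ s := by exact_mod_cast hs
  have h := pow_mul_norm_splineFourier_pred_le_add_sum (l := 3) (by omega : 0 < s) fun j hj =>
    pow_mul_norm_splineFourier_two_le (ξ := ξ) (fun x _ => abs_fspline_zero_le s x)
      (fun x hx => abs_fspline_one_le hs hx) (fun x hx => abs_fspline_two_le hs hx) hj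
  rw [Finset.sum_add_distrib, Finset.sum_add_distrib, ← Finset.sum_mul, ← Finset.sum_mul,
    ← Finset.sum_mul, ← Finset.mul_sum, ← Finset.mul_sum, sum_range_cast,
    sum_range_cast_mul_pred] at h
  refine h.trans ?_
  simp only [Finset.sum_const, Finset.card_range, nsmul_eq_mul, Nat.cast_ofNat, mul_one]
  field_simp
  nlinarith

lemma pow_mul_norm_splineFourier_pred_le (hs : 6 ≤ s) (ξ : ℝ) (hl : l ≤ 3) :
    |ξ| ^ s * ‖splineFourier s l (s - 1) ξ‖ ≤ decayConst l * s := by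
  have hconst (l : ℕ) (hl : l - 1 = 0) :
      |ξ| ^ s * ‖splineFourier s l (s - 1) ξ‖ ≤ 2 * s + l * ∑ j ∈ Finset.range s, (2 * 1 : ℝ) := by
    refine pow_mul_norm_splineFourier_pred_le_add_sum (by omega) fun j hj => ?_
    rw [hl]
    exact pow_mul_norm_splineFourier_zero_le (fun x _ => abs_fspline_zero_le s x) hj
  interval_cases l
  · simpa [decayConst] using hconst 0 rfl
  · refine (hconst 1 rfl).trans_eq ?_
    simp only [decayConst, Finset.sum_const, Finset.card_range, nsmul_eq_mul]
    push_cast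
    ring
  · exact pow_mul_norm_splineFourier_two_pred_le hs ξ
  · exact pow_mul_norm_splineFourier_three_pred_le hs ξ

lemma norm_splineFourier_pred_le (hs : 6 ≤ s) {b : ℝ} (hl : l ≤ 3) (hb : 0 < b) (hξ : b ≤ |ξ|) :
    ‖splineFourier s l (s - 1) ξ‖ ≤ decayConst l * s / b ^ s := by
  rw [le_div_iff₀ (by positivity), mul_comm]
  refine le_trans ?_ (pow_mul_norm_splineFourier_pred_le hs ξ hl)
  gcongr

end FourierDecay

/-! ### Poisson summation for the sampled spline -/

section Poisson

lemma sum_Icc_eq_tsum_fourier {f : ℝ → ℂ} {N : ℕ} (hf : Continuous f)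
    (hf0 : ∀ u : ℝ, N + 1 ≤ |u| → f u = 0)
    (hsum : Summable fun n : ℤ => FourierTransform.fourier f (n : ℝ)) :
    ∑ k ∈ Finset.Icc (-(N : ℤ)) N, f k = ∑' n : ℤ, FourierTransform.fourier f (n : ℝ) := by
  have hdecay : f =O[Filter.cocompact ℝ] fun x : ℝ => |x| ^ (-(2 : ℝ)) := by
    refine Filter.EventuallyEq.trans_isBigO (f₂ := fun _ => (0 : ℂ)) ?_
      (Asymptotics.isBigO_zero _ _)
    filter_upwards [tendsto_norm_cocompact_atTop.eventually_ge_atTop ((N : ℝ) + 1)] with u hu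
      using hf0 u hu
  have h := Real.tsum_eq_tsum_fourier_of_rpow_decay_of_summable hf one_lt_two hdecay hsum 0
  simp only [zero_add, QuotientAddGroup.mk_zero, fourier_eval_zero, mul_one] at h
  rw [← h, tsum_eq_sum]
  intro k hk
  refine hf0 k ?_
  rw [Finset.mem_Icc, ← abs_le] at hk
  exact_mod_cast not_le.mp hk

variable {φ : ℝ → ℂ}

lemma fourier_indicator_Icc_div_mul_exp (φ : ℝ → ℂ) {M : ℝ} (hM : 0 < M) (t w : ℝ) :
    FourierTransform.fourier (fun u : ℝ => (Set.Icc (-1) 1).indicator φ (u / M) *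
        Complex.exp (u * t * Complex.I)) w =
      M * ∫ x in (-1 : ℝ)..1, φ x * Complex.exp (x * (M * (t - 2 * π * w) : ℝ) * Complex.I) := by
  have hscale := Measure.integral_comp_div (fun x : ℝ => (Set.Icc (-1) 1).indicator
    (fun x => φ x * Complex.exp (x * (M * (t - 2 * π * w) : ℝ) * Complex.I)) x) M
  rw [integral_indicator measurableSet_Icc, integral_Icc_eq_integral_Ioc,
    ← intervalIntegral.integral_of_le (by norm_num), abs_of_pos hM, Complex.real_smul] at hscale
  rw [Real.fourier_real_eq_integral_exp_smul, ← hscale]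
  have hMC : (M : ℂ) ≠ 0 := by exact_mod_cast hM.ne'
  congr 1
  funext u
  by_cases hu : u / M ∈ Set.Icc (-1 : ℝ) 1
  · rw [Set.indicator_of_mem hu, Set.indicator_of_mem hu, smul_eq_mul, mul_left_comm,
      ← Complex.exp_add]
    congr 2
    push_cast
    field_simp
    ring
  · rw [Set.indicator_of_notMem hu, Set.indicator_of_notMem hu, zero_mul, smul_zero]

lemma continuous_indicator_Icc (hφ : Continuous φ) (h₀ : φ (-1) = 0) (h₁ : φ 1 = 0) :
    Continuous ((Set.Icc (-1) 1).indicator φ) := by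
  refine continuous_indicator (fun a ha => ?_) hφ.continuousOn
  rw [frontier_Icc (by norm_num)] at ha
  rcases ha with rfl | rfl <;> assumption

lemma indicator_Icc_eq_zero_of_one_le_abs (h₀ : φ (-1) = 0) (h₁ : φ 1 = 0) {x : ℝ}
    (hx : 1 ≤ |x|) : (Set.Icc (-1) 1).indicator φ x = 0 := by
  refine Set.indicator_apply_eq_zero.mpr fun hmem => ?_
  rcases le_abs'.mp hx with h | h
  · rw [le_antisymm h hmem.1, h₀]
  · rw [le_antisymm hmem.2 h, h₁]

lemma sum_sample_mul_exp_eq_tsum (hφ : Continuous φ) (h₀ : φ (-1) = 0) (h₁ : φ 1 = 0) (N : ℕ)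
    (t : ℝ) (hsum : Summable fun n : ℤ => ∫ x in (-1 : ℝ)..1,
      φ x * Complex.exp (x * ((N + 1) * (t + 2 * π * n) : ℝ) * Complex.I)) :
    ∑ k ∈ Finset.Icc (-(N : ℤ)) N, φ (k / (N + 1)) * Complex.exp (k * t * Complex.I) =
      (N + 1) * ∑' n : ℤ, ∫ x in (-1 : ℝ)..1,
        φ x * Complex.exp (x * ((N + 1) * (t + 2 * π * n) : ℝ) * Complex.I) := by
  have hM : (0 : ℝ) < N + 1 := by positivity
  have hfourier (n : ℤ) := fourier_indicator_Icc_div_mul_exp φ hM t n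
  rw [← (Equiv.neg ℤ).summable_iff] at hsum
  rw [← (Equiv.neg ℤ).tsum_eq, ← tsum_mul_left]
  simp only [Function.comp_def, Equiv.neg_apply, Int.cast_neg, mul_neg, ← sub_eq_add_neg] at hsum ⊢
  have hcast : ((N + 1 : ℝ) : ℂ) = N + 1 := by push_cast; rfl
  simp only [← hcast, ← hfourier]
  rw [← sum_Icc_eq_tsum_fourier (N := N)]
  · refine Finset.sum_congr rfl fun k hk => ?_
    rw [Finset.mem_Icc] at hk
    have hk₁ : -(N : ℝ) ≤ k := by exact_mod_cast hk.1
    have hk₂ : (k : ℝ) ≤ N := by exact_mod_cast hk.2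
    rw [Set.indicator_of_mem, Complex.ofReal_intCast]
    constructor
    · rw [le_div_iff₀ hM]; linarith
    · rw [div_le_iff₀ hM]; linarith
  · exact ((continuous_indicator_Icc hφ h₀ h₁).comp (by fun_prop)).mul (by fun_prop)
  · intro u hu
    rw [indicator_Icc_eq_zero_of_one_le_abs h₀ h₁, zero_mul]
    rwa [abs_div, abs_of_pos hM, le_div_iff₀ hM, one_mul]
  · simpa only [hfourier] using hsum.mul_left ((N + 1 : ℝ) : ℂ)

lemma sum_fspline_eq_tsum {s : ℕ} (hs : 2 ≤ s) (l N : ℕ) (t : ℝ)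
    (hsum : Summable fun n : ℤ => splineFourier s l (s - 1) ((N + 1) * (t + 2 * π * n))) :
    ∑ k ∈ Finset.Icc (-(N : ℤ)) N, (fspline s (s - 1) (k / (N + 1)) : ℂ) *
        ((k / (N + 1)) ^ l * Complex.exp (k * t * Complex.I)) =
      (N + 1) * ∑' n : ℤ, splineFourier s l (s - 1) ((N + 1) * (t + 2 * π * n)) := by
  obtain ⟨k, rfl⟩ : ∃ k, s = k + 2 := ⟨s - 2, by omega⟩
  have hφ : Continuous fun x : ℝ => (fspline (k + 2) (k + 1) x : ℂ) * (x : ℂ) ^ l :=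
    (Complex.continuous_ofReal.comp (continuous_fspline_succ _ _)).mul (by fun_prop)
  have h := sum_sample_mul_exp_eq_tsum hφ (by simp [fspline_succ_neg_one])
    (by simp [fspline_succ_one]) N t
    (by simpa [splineFourier, mul_assoc] using hsum)
  simpa [splineFourier, mul_assoc] using h

end Poisson

section Tails

lemma summable_and_norm_tsum_int_le {a : ℤ → ℂ} {u : ℕ → ℝ} {U : ℝ} (hu : HasSum u U)
    (hpos : ∀ n : ℕ, ‖a n‖ ≤ u n) (hneg : ∀ n : ℕ, ‖a (-(n + 1 : ℤ))‖ ≤ u n) :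
    Summable a ∧ ‖∑' n, a n‖ ≤ 2 * U := by
  have h := HasSum.of_nat_of_neg_add_one (f := a) (hu.summable.of_norm_bounded hpos).hasSum
    (hu.summable.of_norm_bounded hneg).hasSum
  refine ⟨h.summable, ?_⟩
  rw [h.tsum_eq, two_mul]
  exact (norm_add_le _ _).trans
    (add_le_add (tsum_of_norm_bounded hu hpos) (tsum_of_norm_bounded hu hneg))

lemma summable_and_norm_tsum_int_sub_le {a : ℤ → ℂ} {u : ℕ → ℝ} {U : ℝ} (hu : HasSum u U)
    (hpos : ∀ n : ℕ, ‖a (n + 1)‖ ≤ u n) (hneg : ∀ n : ℕ, ‖a (-(n + 1 : ℤ))‖ ≤ u n) :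
    Summable a ∧ ‖∑' n, a n - a 0‖ ≤ 2 * U := by
  have h := HasSum.of_add_one_of_neg_add_one (f := a) (hu.summable.of_norm_bounded hpos).hasSum
    (hu.summable.of_norm_bounded hneg).hasSum
  refine ⟨h.summable, ?_⟩
  rw [h.tsum_eq, two_mul, add_right_comm, add_sub_cancel_right]
  exact (norm_add_le _ _).trans
    (add_le_add (tsum_of_norm_bounded hu hpos) (tsum_of_norm_bounded hu hneg))

lemma hasSum_one_div_succ_sq : HasSum (fun n : ℕ => 1 / ((n : ℝ) + 1) ^ 2) (π ^ 2 / 6) := by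
  simpa using (hasSum_nat_add_iff' (f := fun n : ℕ => 1 / (n : ℝ) ^ 2) 1).mpr hasSum_zeta_two

variable {s : ℕ}

lemma one_div_odd_pow_le (hs : 6 ≤ s) (j : ℕ) :
    1 / (2 * (j : ℝ) + 1) ^ s ≤
      1 / 81 * (1 / ((j : ℝ) + 1) ^ 2) + if j = 0 then 80 / 81 else 0 := by
  rcases Nat.eq_zero_or_pos j with rfl | hj
  · norm_num
  · have hj1 : (1 : ℝ) ≤ j := by exact_mod_cast hj
    rw [if_neg hj.ne', add_zero, one_div_mul_one_div_rev]
    apply one_div_le_one_div_of_le (by positivity)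
    calc ((j : ℝ) + 1) ^ 2 * 81 = ((j : ℝ) + 1) ^ 2 * 3 ^ 4 := by norm_num
      _ ≤ (2 * (j : ℝ) + 1) ^ 2 * (2 * (j : ℝ) + 1) ^ 4 := by gcongr <;> linarith
      _ = (2 * (j : ℝ) + 1) ^ 6 := by ring
      _ ≤ (2 * (j : ℝ) + 1) ^ s := pow_le_pow_right₀ (by linarith) hs

lemma summable_one_div_odd_pow (hs : 6 ≤ s) :
    Summable fun j : ℕ => 1 / (2 * (j : ℝ) + 1) ^ s :=
  .of_nonneg_of_le (fun _ => by positivity) (one_div_odd_pow_le hs)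
    ((hasSum_one_div_succ_sq.summable.mul_left _).add (hasSum_ite_eq 0 _).summable)

lemma tsum_one_div_odd_pow_le (hs : 6 ≤ s) :
    ∑' j : ℕ, 1 / (2 * (j : ℝ) + 1) ^ s ≤ 1.008 := by
  refine (hasSum_le (one_div_odd_pow_le hs) (summable_one_div_odd_pow hs).hasSum
    ((hasSum_one_div_succ_sq.mul_left _).add (hasSum_ite_eq 0 _))).trans ?_
  nlinarith [Real.pi_lt_d4, Real.pi_pos]

lemma norm_splineFourier_pred_mul_le (hs : 6 ≤ s) {l : ℕ} (hl : l ≤ 3) {M t c r : ℝ} (hM : 0 < M)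
    (ht : 0 < t) (hc : 0 < c) (hr : c * t ≤ |r|) :
    ‖splineFourier s l (s - 1) (M * r)‖ ≤ decayConst l * s / (M * t) ^ s * (1 / c ^ s) := by
  refine (norm_splineFourier_pred_le hs (b := M * t * c) hl (by positivity) ?_).trans_eq ?_
  · rw [abs_mul, abs_of_pos hM, mul_assoc, mul_comm t]
    gcongr
  · rw [mul_pow, ← div_div, div_eq_mul_one_div _ (c ^ s)]

lemma norm_natCast_add_one (N : ℕ) : ‖(N + 1 : ℂ)‖ = N + 1 := by
  rw [← Nat.cast_succ, Complex.norm_natCast, Nat.cast_succ]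

lemma norm_sum_fspline_le (hs : 6 ≤ s) {l : ℕ} (hl : l ≤ 3) (N : ℕ) {t : ℝ} (ht : 0 < t)
    (htπ : t ≤ π) :
    ‖∑ k ∈ Finset.Icc (-(N : ℤ)) N, (fspline s (s - 1) (k / (N + 1)) : ℂ) *
        ((k / (N + 1)) ^ l * Complex.exp (k * t * Complex.I))‖ ≤
      (N + 1) * (2 * 1.008 * (decayConst l * s / ((N + 1) * t) ^ s)) := by
  have hM : (0 : ℝ) < N + 1 := by positivity
  have hD : 0 ≤ decayConst l * s / ((N + 1) * t) ^ s :=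
    div_nonneg (mul_nonneg (decayConst_nonneg l) s.cast_nonneg) (by positivity)
  have hterm (j : ℕ) {r : ℝ} (hr : (2 * j + 1) * t ≤ |r|) :=
    norm_splineFourier_pred_mul_le hs hl hM ht (by positivity) hr
  obtain ⟨hsum, hle⟩ := summable_and_norm_tsum_int_le
    (a := fun n : ℤ => splineFourier s l (s - 1) ((N + 1) * (t + 2 * π * n)))
    ((summable_one_div_odd_pow hs).hasSum.mul_left (decayConst l * s / ((N + 1) * t) ^ s))
    (fun j => hterm j (le_abs.mpr (.inl (by push_cast; nlinarith [j.cast_nonneg (α := ℝ)]))))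
    (fun j => hterm j (le_abs.mpr (.inr (by push_cast; nlinarith [j.cast_nonneg (α := ℝ)]))))
  rw [sum_fspline_eq_tsum (by omega) l N t hsum, norm_mul, norm_natCast_add_one]
  refine mul_le_mul_of_nonneg_left (hle.trans ?_) hM.le
  linarith [mul_le_mul_of_nonneg_left (tsum_one_div_odd_pow_le hs) hD]

lemma gtilde_div (s N : ℕ) (k : ℤ) :
    gtilde s ((k : ℝ) / (2 * ((N : ℝ) + 1))) = fspline s (s - 1) (k / (N + 1)) := by
  rw [gtilde]
  congr 1
  field_simp

lemma splineFourier_zero_zero (s k : ℕ) :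
    splineFourier s 0 k 0 = ((∫ x in (-1 : ℝ)..1, fspline s k x : ℝ) : ℂ) := by
  simp [splineFourier, intervalIntegral.integral_ofReal]

lemma gnorm_eq_tsum (hs : 2 ≤ s) (N : ℕ)
    (hsum : Summable fun n : ℤ => splineFourier s 0 (s - 1) ((N + 1) * (2 * π * n))) :
    (gnorm s N : ℂ) = (N + 1) * ∑' n : ℤ, splineFourier s 0 (s - 1) ((N + 1) * (2 * π * n)) := by
  have h := sum_fspline_eq_tsum hs 0 N 0 (by simpa only [zero_add] using hsum)
  simp only [zero_add] at h
  rw [← h, gnorm, Complex.ofReal_sum]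
  simp [gtilde_div]

lemma abs_gnorm_sub_le (hs : 6 ≤ s) (N : ℕ) :
    |gnorm s N - (N + 1) * ∫ x in (-1 : ℝ)..1, fspline s (s - 1) x| ≤
      (N + 1) * (4 * (2 * s / ((N + 1) * (2 * π)) ^ s)) := by
  have hM : (0 : ℝ) < N + 1 := by positivity
  have hterm (j : ℕ) {r : ℝ} (hr : (j + 1) * (2 * π) ≤ |r|) :
      ‖splineFourier s 0 (s - 1) ((N + 1) * r)‖ ≤
        2 * s / ((N + 1) * (2 * π)) ^ s * (1 / ((j : ℝ) + 1) ^ 2) := by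
    refine (norm_splineFourier_pred_mul_le hs (by norm_num) hM (by positivity) (by positivity)
      hr).trans ?_
    rw [decayConst]
    gcongr
    · linarith [j.cast_nonneg (α := ℝ)]
    · omega
  obtain ⟨hsum, hle⟩ := summable_and_norm_tsum_int_sub_le
    (a := fun n : ℤ => splineFourier s 0 (s - 1) ((N + 1) * (2 * π * n)))
    (hasSum_one_div_succ_sq.mul_left _)
    (fun j => hterm j (le_abs.mpr (.inl (by push_cast; linarith))))
    (fun j => hterm j (le_abs.mpr (.inr (by push_cast; linarith))))
  have heq : ((gnorm s N - (N + 1) * ∫ x in (-1 : ℝ)..1, fspline s (s - 1) x : ℝ) : ℂ) =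
      (N + 1) * (∑' n : ℤ, splineFourier s 0 (s - 1) ((N + 1) * (2 * π * n)) -
        splineFourier s 0 (s - 1) 0) := by
    push_cast
    rw [gnorm_eq_tsum (by omega) N hsum, splineFourier_zero_zero, mul_sub]
  rw [← Real.norm_eq_abs, ← Complex.norm_real, heq, norm_mul, norm_natCast_add_one]
  simp only [Int.cast_zero, mul_zero] at hle
  refine mul_le_mul_of_nonneg_left (hle.trans ?_) hM.le
  have hπ : π ^ 2 / 6 ≤ 2 := by nlinarith [Real.pi_pos, Real.pi_lt_d2]
  rw [mul_left_comm, mul_comm]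
  nlinarith [show 0 ≤ 2 * s / ((N + 1) * (2 * π)) ^ s by positivity]

/-- The factor `2 / (2 ^ (s - 1) * (s - 1)!)` is the integral of the spline, which aliasing thus
changes by at most one percent. -/
lemma aliasing_le (hs : 6 ≤ s) {N : ℕ} (hN : 2 * s ≤ N) :
    4 * (2 * s / ((N + 1) * (2 * π)) ^ s) ≤
      0.01 * (2 / (2 ^ (s - 1) * ((s - 1).factorial : ℝ))) := by
  have hNR : 2 * (s : ℝ) ≤ N := by exact_mod_cast hN
  have hprod : 2 * (s : ℝ) * (2 ^ (s - 1) * (s - 1).factorial) = 2 ^ s * s.factorial := by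
    obtain ⟨k, rfl⟩ : ∃ k, s = k + 1 := ⟨s - 1, by omega⟩
    rw [Nat.add_sub_cancel, Nat.factorial_succ]
    push_cast
    ring
  have hfac : (2 : ℝ) ^ s * s.factorial ≤ (2 * s) ^ s := by
    rw [mul_pow]
    gcongr
    exact_mod_cast Nat.factorial_le_pow s
  have hsix : (6 : ℝ) ^ 6 ≤ 6 ^ s := pow_le_pow_right₀ (by norm_num) hs
  have hbase : (2 * s) ^ s * (6 : ℝ) ^ s ≤ ((N + 1) * (2 * π)) ^ s := by
    rw [← mul_pow]
    gcongr <;> linarith [Real.pi_gt_three]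
  rw [← mul_div_assoc, ← mul_div_assoc, div_le_div_iff₀ (by positivity) (by positivity), mul_assoc,
    hprod]
  nlinarith [show (0 : ℝ) < (2 * s) ^ s by positivity]

lemma gnorm_ge (hs : 6 ≤ s) {N : ℕ} (hN : 2 * s ≤ N) :
    (N + 1) * (0.99 * (2 / (2 ^ (s - 1) * ((s - 1).factorial : ℝ)))) ≤ gnorm s N := by
  have h := (abs_le.mp (abs_gnorm_sub_le hs N)).1
  rw [integral_fspline_pred (by omega)] at h
  have hM : (0 : ℝ) ≤ N + 1 := by positivity
  linarith [mul_le_mul_of_nonneg_left (aliasing_le hs hN) hM]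

end Tails

/-! ### Decay of the kernel and its derivatives -/

section KernelDecay

variable {s N : ℕ}

lemma hasDerivAt_pow_mul_cexp_mul_I (k : ℤ) (l : ℕ) (t : ℝ) :
    HasDerivAt (fun x : ℝ => (k * Complex.I) ^ l * Complex.exp (k * x * Complex.I))
      ((k * Complex.I) ^ (l + 1) * Complex.exp (k * t * Complex.I)) t := by
  have h : HasDerivAt (fun z : ℂ => Complex.exp (k * z * Complex.I))
      (Complex.exp (k * t * Complex.I) * (k * 1 * Complex.I)) (t : ℂ) :=
    (((hasDerivAt_id (t : ℂ)).const_mul (k : ℂ)).mul_const Complex.I).cexp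
  refine (h.comp_ofReal.const_mul _).congr_deriv ?_
  ring

lemma iteratedDeriv_sigmaT (s N l : ℕ) :
    iteratedDeriv l (sigmaT s N) = fun t : ℝ => ((1 / (gnorm s N : ℂ)) *
      ∑ k ∈ Finset.Icc (-(N : ℤ)) (N : ℤ), (gtilde s ((k : ℝ) / (2 * ((N : ℝ) + 1))) : ℂ) *
        ((k * Complex.I) ^ l * Complex.exp (k * t * Complex.I))).re := by
  induction l with
  | zero =>
    ext t
    simp [sigmaT]
  | succ l ih =>
    ext t
    rw [iteratedDeriv_succ, ih]
    have h := (HasDerivAt.fun_sum (u := Finset.Icc (-(N : ℤ)) N) fun k _ =>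
      (hasDerivAt_pow_mul_cexp_mul_I k l t).const_mul
        (gtilde s ((k : ℝ) / (2 * ((N : ℝ) + 1))) : ℂ)).const_mul (1 / (gnorm s N : ℂ))
    exact (Complex.reCLM.hasFDerivAt.comp_hasDerivAt t h).deriv

lemma one_div_gnorm_le (hs : 6 ≤ s) (hN : 2 * s ≤ N) :
    1 / gnorm s N ≤ 1.02 / (2 * 1.008) * ((s - 1).factorial * 2 ^ (s - 1)) / (N + 1) := by
  refine (one_div_le_one_div_of_le (by positivity) (gnorm_ge hs hN)).trans ?_
  rw [div_le_div_iff₀ (by positivity) (by positivity)]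
  field_simp
  norm_num

lemma sum_gtilde_mul_exp (s N l : ℕ) (t : ℝ) :
    ∑ k ∈ Finset.Icc (-(N : ℤ)) (N : ℤ), (gtilde s ((k : ℝ) / (2 * ((N : ℝ) + 1))) : ℂ) *
        ((k * Complex.I) ^ l * Complex.exp (k * t * Complex.I)) =
      Complex.I ^ l * (N + 1) ^ l * ∑ k ∈ Finset.Icc (-(N : ℤ)) N,
        (fspline s (s - 1) (k / (N + 1)) : ℂ) *
          ((k / (N + 1)) ^ l * Complex.exp (k * t * Complex.I)) := by
  have hM : (N + 1 : ℂ) ≠ 0 := by exact_mod_cast N.succ_ne_zero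
  rw [Finset.mul_sum]
  refine Finset.sum_congr rfl fun k _ => ?_
  rw [gtilde_div, div_pow, mul_pow]
  field_simp

lemma abs_iteratedDeriv_sigmaT_le (hs : 6 ≤ s) (hN : 2 * s ≤ N) {l : ℕ} (hl : l ≤ 3) {t : ℝ}
    (ht : 0 < t) (htπ : t ≤ π) :
    |iteratedDeriv l (sigmaT s N) t| ≤ 1.02 * (s - 1).factorial * 2 ^ (s - 1) *
      (decayConst l * s) * ((N + 1) ^ l / ((N + 1) * t) ^ s) := by
  have hg : 0 < gnorm s N := lt_of_lt_of_le (by positivity) (gnorm_ge hs hN)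
  simp only [iteratedDeriv_sigmaT, sum_gtilde_mul_exp]
  refine (Complex.abs_re_le_norm _).trans ?_
  rw [norm_mul, norm_mul, norm_mul, norm_pow, norm_pow, Complex.norm_I, one_pow, one_mul,
    norm_natCast_add_one, norm_div, norm_one, Complex.norm_real, Real.norm_of_nonneg hg.le]
  calc 1 / gnorm s N * ((N + 1) ^ l * _)
      ≤ 1.02 / (2 * 1.008) * ((s - 1).factorial * 2 ^ (s - 1)) / (N + 1) *
          ((N + 1) ^ l * ((N + 1) * (2 * 1.008 * (decayConst l * s / ((N + 1) * t) ^ s)))) := by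
        refine mul_le_mul (one_div_gnorm_le hs hN) ?_ (by positivity) (by positivity)
        gcongr
        exact norm_sum_fspline_le hs hl N ht htπ
    _ = _ := by field_simp

end KernelDecay

/-! ### Differentiation on `SO(3)` -/

lemma IsSO3.mul_transpose_self {x : Mat3} (hx : IsSO3 x) : x * x.transpose = 1 :=
  mul_eq_one_comm.mp hx.1

lemma IsSO3.inv_eq {x : Mat3} (hx : IsSO3 x) : x⁻¹ = x.transpose :=
  Matrix.inv_eq_left_inv hx.1

lemma IsSO3.transpose {x : Mat3} (hx : IsSO3 x) : IsSO3 x.transpose :=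
  ⟨by rw [Matrix.transpose_transpose, hx.mul_transpose_self], by rw [Matrix.det_transpose, hx.2]⟩

lemma IsSO3.mul {x y : Mat3} (hx : IsSO3 x) (hy : IsSO3 y) : IsSO3 (x * y) := by
  refine ⟨?_, by rw [Matrix.det_mul, hx.2, hy.2, mul_one]⟩
  rw [Matrix.transpose_mul, Matrix.mul_assoc, ← Matrix.mul_assoc x.transpose, hx.1, Matrix.one_mul,
    hy.1]

lemma transpose_Lgen (i : Fin 3) : (Lgen i).transpose = -Lgen i := by
  ext a b
  fin_cases i <;> fin_cases a <;> fin_cases b <;> simp [Lgen]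

lemma transpose_exp_Lgen (t : ℝ) (i : Fin 3) :
    (NormedSpace.exp (t • Lgen i)).transpose = NormedSpace.exp ((-t) • Lgen i) := by
  rw [← Matrix.exp_transpose, Matrix.transpose_smul, transpose_Lgen, smul_neg, neg_smul]

lemma transpose_exp_Lgen_mul_self (t : ℝ) (i : Fin 3) :
    (NormedSpace.exp (t • Lgen i)).transpose * NormedSpace.exp (t • Lgen i) = 1 := by
  rw [transpose_exp_Lgen, ← Matrix.exp_add_of_commute, neg_smul, neg_add_cancel,
    NormedSpace.exp_zero]
  exact ((Commute.refl _).smul_left _).smul_right _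

lemma isSO3_exp_Lgen (t : ℝ) (i : Fin 3) : IsSO3 (NormedSpace.exp (t • Lgen i)) := by
  refine ⟨transpose_exp_Lgen_mul_self t i, ?_⟩
  have hsq : NormedSpace.exp (t • Lgen i) =
      NormedSpace.exp ((t / 2) • Lgen i) * NormedSpace.exp ((t / 2) • Lgen i) := by
    rw [← Matrix.exp_add_of_commute _ _ (Commute.refl _), ← add_smul, add_halves]
  rw [hsq, Matrix.det_mul, ← Matrix.det_one (n := Fin 3), ← transpose_exp_Lgen_mul_self (t / 2) i,
    Matrix.det_mul, Matrix.det_transpose]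

/-- The function `z ↦ tr (z A) / 2`: the derivatives of `z ↦ tr z / 2` along left-invariant vector
fields are of this form. -/
noncomputable def halfTrace (z A : Mat3) : ℝ := Matrix.trace (z * A) / 2

/-- The cosine of the rotation angle of `z`. -/
noncomputable def cosRotAngle (z : Mat3) : ℝ := (Matrix.trace z - 1) / 2

section

attribute [local instance] Matrix.linftyOpNormedRing Matrix.linftyOpNormedAlgebra

lemma hasDerivAt_halfTrace_mul_exp (z L A : Mat3) :
    HasDerivAt (fun t : ℝ => halfTrace (z * NormedSpace.exp (t • L)) A)
      (halfTrace z (L * A)) 0 := by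
  have hexp := hasDerivAt_exp_smul_const (𝕂 := ℝ) L 0
  rw [zero_smul, NormedSpace.exp_zero, one_mul] at hexp
  have h := ((LinearMap.toContinuousLinearMap
    (Matrix.traceLinearMap (Fin 3) ℝ ℝ)).hasFDerivAt.comp_hasDerivAt 0
      ((hexp.const_mul z).mul_const A)).div_const 2
  rwa [Matrix.mul_assoc] at h

end

lemma hasDerivAt_eval_cosRotAngle_mul_exp (q : ℝ[X]) (z L : Mat3) :
    HasDerivAt (fun t : ℝ => q.eval (cosRotAngle (z * NormedSpace.exp (t • L))))
      (q.derivative.eval (cosRotAngle z) * halfTrace z L) 0 := by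
  have hcos : HasDerivAt (fun t : ℝ => cosRotAngle (z * NormedSpace.exp (t • L)))
      (halfTrace z L) 0 := by
    simpa [halfTrace, cosRotAngle, sub_div] using
      (hasDerivAt_halfTrace_mul_exp z L 1).sub_const (1 / 2)
  simpa [Function.comp_def] using
    (q.hasDerivAt (cosRotAngle (z * NormedSpace.exp ((0 : ℝ) • L)))).comp (0 : ℝ) hcos

section

variable (q : ℝ[X]) (j i n : Fin 3) (z : Mat3)

/-- The derivative of the zonal function `z ↦ q (cosRotAngle z)` along `Lgen i`. -/
noncomputable def zonalDeriv : ℝ :=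
  q.derivative.eval (cosRotAngle z) * halfTrace z (Lgen i)

/-- The second derivative of the zonal function `z ↦ q (cosRotAngle z)`, first along `Lgen n`, then
along `Lgen i`. -/
noncomputable def zonalDerivTwo : ℝ :=
  q.derivative.derivative.eval (cosRotAngle z) * halfTrace z (Lgen i) * halfTrace z (Lgen n) +
    q.derivative.eval (cosRotAngle z) * halfTrace z (Lgen i * Lgen n)

/-- The third derivative of the zonal function `z ↦ q (cosRotAngle z)`, first along `Lgen n`, then
along `Lgen i`, then along `Lgen j`. -/
noncomputable def zonalDerivThree : ℝ :=
  q.derivative.derivative.derivative.eval (cosRotAngle z) * halfTrace z (Lgen j) *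
      halfTrace z (Lgen i) * halfTrace z (Lgen n) +
    q.derivative.derivative.eval (cosRotAngle z) *
      (halfTrace z (Lgen j * Lgen i) * halfTrace z (Lgen n) +
        halfTrace z (Lgen i) * halfTrace z (Lgen j * Lgen n) +
        halfTrace z (Lgen j) * halfTrace z (Lgen i * Lgen n)) +
    q.derivative.eval (cosRotAngle z) * halfTrace z (Lgen j * (Lgen i * Lgen n))

lemma hasDerivAt_zonalDeriv :
    HasDerivAt (fun t : ℝ => zonalDeriv q n (z * NormedSpace.exp (t • Lgen i)))
      (zonalDerivTwo q i n z) 0 := by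
  simpa [zonalDeriv, zonalDerivTwo] using
    (hasDerivAt_eval_cosRotAngle_mul_exp q.derivative z (Lgen i)).fun_mul
      (hasDerivAt_halfTrace_mul_exp z (Lgen i) (Lgen n))

lemma hasDerivAt_zonalDerivTwo :
    HasDerivAt (fun t : ℝ => zonalDerivTwo q i n (z * NormedSpace.exp (t • Lgen j)))
      (zonalDerivThree q j i n z) 0 := by
  have h := (((hasDerivAt_eval_cosRotAngle_mul_exp q.derivative.derivative z (Lgen j)).fun_mul
    (hasDerivAt_halfTrace_mul_exp z (Lgen j) (Lgen i))).fun_mul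
    (hasDerivAt_halfTrace_mul_exp z (Lgen j) (Lgen n))).fun_add
    ((hasDerivAt_eval_cosRotAngle_mul_exp q.derivative z (Lgen j)).fun_mul
      (hasDerivAt_halfTrace_mul_exp z (Lgen j) (Lgen i * Lgen n)))
  simp only [zero_smul, NormedSpace.exp_zero, mul_one] at h
  exact h.congr_deriv (by rw [zonalDerivThree]; ring)

end

lemma Xx_eq_of_hasDerivAt {f : Mat3 → Mat3 → ℝ} {G G' : Mat3 → ℝ} {i : Fin 3}
    (hf : ∀ x y, IsSO3 x → IsSO3 y → f x y = G (y.transpose * x))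
    (hG : ∀ z, HasDerivAt (fun t : ℝ => G (z * NormedSpace.exp (t • Lgen i))) (G' z) 0)
    (x y : Mat3) (hx : IsSO3 x) (hy : IsSO3 y) : Xx i f x y = G' (y.transpose * x) := by
  rw [← (hG (y.transpose * x)).deriv, Xx]
  congr with t
  rw [hf _ _ (hx.mul (isSO3_exp_Lgen t i)) hy, Matrix.mul_assoc]

/-! ### Unit quaternions and rotations about an axis -/

/-- The rotation matrix of the quaternion with real part `a` and imaginary part `v`. -/
def quatMat (a : ℝ) (v : Fin 3 → ℝ) : Mat3 :=
  !![a ^ 2 + v 0 ^ 2 - v 1 ^ 2 - v 2 ^ 2, 2 * (v 0 * v 1 - a * v 2), 2 * (v 0 * v 2 + a * v 1);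
    2 * (v 0 * v 1 + a * v 2), a ^ 2 - v 0 ^ 2 + v 1 ^ 2 - v 2 ^ 2, 2 * (v 1 * v 2 - a * v 0);
    2 * (v 0 * v 2 - a * v 1), 2 * (v 1 * v 2 + a * v 0), a ^ 2 - v 0 ^ 2 - v 1 ^ 2 + v 2 ^ 2]

/-- The entries `∑ k, ε_{ink} v_k` of the skew-symmetric matrix of the cross product with `v`. -/
noncomputable def crossMat (v : Fin 3 → ℝ) (i n : Fin 3) : ℝ := ∑ k, eps3 i n k * v k

/-- Four times the matrix of products of the components of the unit quaternion of a rotation. -/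
def quatOuter (z : Mat3) : Matrix (Fin 4) (Fin 4) ℝ :=
  !![1 + z 0 0 + z 1 1 + z 2 2, z 2 1 - z 1 2, z 0 2 - z 2 0, z 1 0 - z 0 1;
    z 2 1 - z 1 2, 1 + z 0 0 - z 1 1 - z 2 2, z 0 1 + z 1 0, z 0 2 + z 2 0;
    z 0 2 - z 2 0, z 0 1 + z 1 0, 1 - z 0 0 + z 1 1 - z 2 2, z 1 2 + z 2 1;
    z 1 0 - z 0 1, z 0 2 + z 2 0, z 1 2 + z 2 1, 1 - z 0 0 - z 1 1 + z 2 2]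

lemma quatMat_neg (a : ℝ) (v : Fin 3 → ℝ) : quatMat (-a) (-v) = quatMat a v := by
  ext i j
  fin_cases i <;> fin_cases j <;> simp [quatMat]

lemma IsSO3.adjugate_eq {z : Mat3} (hz : IsSO3 z) : z.adjugate = z.transpose := by
  rw [← hz.inv_eq, Matrix.inv_def, hz.2, Ring.inverse_one, one_smul]

lemma IsSO3.quatOuter_mul {z : Mat3} (hz : IsSO3 z) (a b c : Fin 4) :
    quatOuter z a b * quatOuter z a c = quatOuter z a a * quatOuter z b c := by
  have hleft := hz.1
  have hright := hz.mul_transpose_self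
  have hadj := hz.adjugate_eq
  simp only [Matrix.adjugate_fin_three, ← Matrix.ext_iff, Matrix.mul_apply, Matrix.transpose_apply,
    Fin.sum_univ_three, Matrix.one_apply, Fin.forall_fin_succ, Matrix.of_apply, Matrix.cons_val,
    Fin.succ_zero_eq_one, Fin.succ_one_eq_two, Fin.isValue, IsEmpty.forall_iff, and_true,
    Fin.reduceEq, if_true, if_false] at hleft hright hadj
  obtain ⟨⟨_, _, _⟩, ⟨_, _, _⟩, ⟨_, _, _⟩⟩ := hleft
  obtain ⟨⟨_, _, _⟩, ⟨_, _, _⟩, ⟨_, _, _⟩⟩ := hright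
  obtain ⟨⟨_, _, _⟩, ⟨_, _, _⟩, ⟨_, _, _⟩⟩ := hadj
  fin_cases a <;> fin_cases b <;> fin_cases c <;> simp [quatOuter] <;> linarith

lemma exists_quatOuter_pos (z : Mat3) : ∃ p, 0 < quatOuter z p p := by
  by_contra! h
  have htrace : ∑ p, quatOuter z p p = 4 := by
    simp [quatOuter, Fin.sum_univ_four]
    ring
  linarith [Finset.sum_nonpos fun p (_ : p ∈ Finset.univ) => h p]

/-- Any row of the rank-one matrix `quatOuter z` with nonzero diagonal entry is a multiple of the
quaternion. -/
lemma IsSO3.exists_mul_eq_quatOuter {z : Mat3} (hz : IsSO3 z) :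
    ∃ q : Fin 4 → ℝ, ∀ b c, q b * q c = quatOuter z b c / 4 := by
  obtain ⟨p, hp⟩ := exists_quatOuter_pos z
  refine ⟨fun b => quatOuter z p b / (2 * √(quatOuter z p p)), fun b c => ?_⟩
  rw [div_mul_div_comm, hz.quatOuter_mul p b c, mul_mul_mul_comm, Real.mul_self_sqrt hp.le]
  field_simp
  norm_num

lemma IsSO3.exists_quatMat {z : Mat3} (hz : IsSO3 z) :
    ∃ (a : ℝ) (v : Fin 3 → ℝ), a ^ 2 + ∑ i, v i ^ 2 = 1 ∧ z = quatMat a v := by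
  obtain ⟨q, hq⟩ := hz.exists_mul_eq_quatOuter
  refine ⟨q 0, ![q 1, q 2, q 3], ?_, ?_⟩
  · simp [Fin.sum_univ_three, pow_two, hq, quatOuter]
    ring
  · ext i j
    fin_cases i <;> fin_cases j <;> simp [quatMat, pow_two, hq, quatOuter] <;> ring

lemma IsSO3.exists_quatMat_nonneg {z : Mat3} (hz : IsSO3 z) :
    ∃ (a : ℝ) (v : Fin 3 → ℝ), 0 ≤ a ∧ a ^ 2 + ∑ i, v i ^ 2 = 1 ∧ z = quatMat a v := by
  obtain ⟨a, v, hav, rfl⟩ := hz.exists_quatMat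
  rcases le_total 0 a with ha | ha
  · exact ⟨a, v, ha, hav, rfl⟩
  · exact ⟨-a, -v, neg_nonneg.mpr ha, by simpa using hav, (quatMat_neg a v).symm⟩

section

variable (a : ℝ) (v : Fin 3 → ℝ)

lemma trace_quatMat : Matrix.trace (quatMat a v) = 3 * a ^ 2 - ∑ i, v i ^ 2 := by
  simp only [quatMat, Matrix.trace_fin_three_of, Fin.sum_univ_three]
  ring

lemma halfTrace_quatMat_Lgen (n : Fin 3) : halfTrace (quatMat a v) (Lgen n) = -2 * a * v n := by
  fin_cases n <;> simp [halfTrace, quatMat, Lgen, Matrix.trace_fin_three] <;> ring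

lemma halfTrace_quatMat_Lgen_mul (i n : Fin 3) :
    halfTrace (quatMat a v) (Lgen i * Lgen n) =
      v i * v n - (if i = n then a ^ 2 else 0) - a * crossMat v i n := by
  fin_cases i <;> fin_cases n <;>
    simp [halfTrace, quatMat, Lgen, Matrix.trace_fin_three, crossMat, eps3] <;> ring

lemma halfTrace_quatMat_Lgen_mul_mul (j i k : Fin 3) :
    halfTrace (quatMat a v) (Lgen j * (Lgen i * Lgen k)) =
      (∑ n, eps3 j i n * halfTrace (quatMat a v) (Lgen n * Lgen k)) / 2 +
      a / 2 * ((if j = i then 2 * v k else 0) + (if j = k then v i else 0) +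
        (if i = k then v j else 0)) + (crossMat v j k * v i + crossMat v i k * v j) / 2 := by
  simp_rw [halfTrace_quatMat_Lgen_mul]
  fin_cases j <;> fin_cases i <;> fin_cases k <;>
    simp [halfTrace, quatMat, Lgen, Matrix.trace_fin_three, Fin.sum_univ_three, crossMat, eps3] <;>
    ring

end

section

variable {a : ℝ} {v : Fin 3 → ℝ}

lemma cosRotAngle_quatMat (h : a ^ 2 + ∑ i, v i ^ 2 = 1) :
    cosRotAngle (quatMat a v) = 2 * a ^ 2 - 1 := by
  rw [cosRotAngle, trace_quatMat]
  linarith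

lemma le_one_of_sq_add_sum_sq_eq_one (h : a ^ 2 + ∑ i, v i ^ 2 = 1) : a ≤ 1 := by
  have hv : 0 ≤ ∑ i, v i ^ 2 := Finset.sum_nonneg fun i _ => sq_nonneg (v i)
  nlinarith

lemma rotAngle_quatMat (ha : 0 ≤ a) (h : a ^ 2 + ∑ i, v i ^ 2 = 1) :
    rotAngle (quatMat a v) = 2 * Real.arccos a := by
  have ha1 := le_one_of_sq_add_sum_sq_eq_one h
  have harccos : Real.arccos a ≤ π / 2 := Real.arccos_le_pi_div_two.mpr ha
  change Real.arccos (cosRotAngle _) = _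
  rw [cosRotAngle_quatMat h]
  nth_rw 1 [← Real.cos_arccos (by linarith) ha1]
  rw [← Real.cos_two_mul, Real.arccos_cos (by linarith [Real.arccos_nonneg a]) (by linarith)]

end

section

variable {t : ℝ} {e : Fin 3 → ℝ}

/-- The rotation by the angle `t` about the axis `e`, assumed to be a unit vector. -/
noncomputable def axisRot (t : ℝ) (e : Fin 3 → ℝ) : Mat3 :=
  quatMat (Real.cos (t / 2)) (Real.sin (t / 2) • e)

lemma sin_eq_two_mul_half (t : ℝ) : Real.sin t = 2 * Real.sin (t / 2) * Real.cos (t / 2) := by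
  rw [← Real.sin_two_mul, mul_div_cancel₀ _ two_ne_zero]

lemma cos_eq_cos_half_sq_sub (t : ℝ) :
    Real.cos t = Real.cos (t / 2) ^ 2 - Real.sin (t / 2) ^ 2 := by
  rw [← Real.cos_two_mul', mul_div_cancel₀ _ two_ne_zero]

lemma cos_half_sq_add_sum_sq (he : ∑ i, e i ^ 2 = 1) :
    Real.cos (t / 2) ^ 2 + ∑ i, (Real.sin (t / 2) • e) i ^ 2 = 1 := by
  simp only [Pi.smul_apply, smul_eq_mul, mul_pow, ← Finset.mul_sum, he, mul_one,
    Real.cos_sq_add_sin_sq]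

lemma cosRotAngle_axisRot (he : ∑ i, e i ^ 2 = 1) : cosRotAngle (axisRot t e) = Real.cos t := by
  rw [axisRot, cosRotAngle_quatMat (cos_half_sq_add_sum_sq he), ← Real.cos_two_mul,
    mul_div_cancel₀ _ two_ne_zero]

lemma exists_smul_eq_of_sum_sq_eq {ι : Type*} [Fintype ι] [Nonempty ι] {v : ι → ℝ} {c : ℝ}
    (h : ∑ i, v i ^ 2 = c ^ 2) : ∃ e : ι → ℝ, ∑ i, e i ^ 2 = 1 ∧ v = c • e := by
  classical
  rcases eq_or_ne c 0 with rfl | hc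
  · refine ⟨Pi.single (Classical.arbitrary ι) 1, by simp [Pi.single_apply], ?_⟩
    rw [zero_pow two_ne_zero, Finset.sum_eq_zero_iff_of_nonneg fun i _ => sq_nonneg _] at h
    ext i
    simpa using h i (Finset.mem_univ i)
  · refine ⟨c⁻¹ • v, ?_, (smul_inv_smul₀ hc v).symm⟩
    simp only [Pi.smul_apply, smul_eq_mul, mul_pow, ← Finset.mul_sum, h]
    field_simp

lemma IsSO3.exists_axisRot {z : Mat3} (hz : IsSO3 z) :
    ∃ e : Fin 3 → ℝ, ∑ i, e i ^ 2 = 1 ∧ z = axisRot (rotAngle z) e := by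
  obtain ⟨a, v, ha, hav, rfl⟩ := hz.exists_quatMat_nonneg
  have hcos : Real.cos (rotAngle (quatMat a v) / 2) = a := by
    rw [rotAngle_quatMat ha hav, mul_div_cancel_left₀ _ two_ne_zero,
      Real.cos_arccos (by linarith) (le_one_of_sq_add_sum_sq_eq_one hav)]
  have hsin := Real.cos_sq_add_sin_sq (rotAngle (quatMat a v) / 2)
  rw [hcos] at hsin
  obtain ⟨e, he, hve⟩ := exists_smul_eq_of_sum_sq_eq (v := v)
    (c := Real.sin (rotAngle (quatMat a v) / 2)) (by linarith)
  exact ⟨e, he, by rw [axisRot, hcos, ← hve]⟩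

end

/-! ### Derivatives of zonal functions in axis-angle coordinates -/

/-- The `l`-th derivative at `t` of the even trigonometric polynomial `q ∘ cos`. -/
noncomputable def radialDeriv (q : ℝ[X]) (l : ℕ) (t : ℝ) : ℝ :=
  iteratedDeriv l (fun t => q.eval (Real.cos t)) t

/-- Half of the cotangent of `t / 2`, the factor with which the first radial derivative enters the
second derivatives of a zonal function. -/
noncomputable def halfCot (t : ℝ) : ℝ := Real.cos (t / 2) / (2 * Real.sin (t / 2))

section

variable (q : ℝ[X]) (t : ℝ) {e : Fin 3 → ℝ}

lemma hasDerivAt_eval_cos :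
    HasDerivAt (fun t => q.eval (Real.cos t)) (-Real.sin t * q.derivative.eval (Real.cos t)) t := by
  simpa [mul_comm, Function.comp_def] using
    (q.hasDerivAt (Real.cos t)).comp t (Real.hasDerivAt_cos t)

lemma radialDeriv_succ (l : ℕ) : radialDeriv q (l + 1) t = deriv (radialDeriv q l) t :=
  congrFun iteratedDeriv_succ t

lemma radialDeriv_one : radialDeriv q 1 t = -Real.sin t * q.derivative.eval (Real.cos t) := by
  rw [radialDeriv, iteratedDeriv_one, (hasDerivAt_eval_cos q t).deriv]

lemma radialDeriv_two :
    radialDeriv q 2 t = Real.sin t ^ 2 * q.derivative.derivative.eval (Real.cos t) -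
      Real.cos t * q.derivative.eval (Real.cos t) := by
  rw [radialDeriv_succ, funext (radialDeriv_one q),
    ((Real.hasDerivAt_sin t).fun_neg.fun_mul (hasDerivAt_eval_cos q.derivative t)).deriv]
  ring

lemma radialDeriv_three :
    radialDeriv q 3 t =
      -Real.sin t ^ 3 * q.derivative.derivative.derivative.eval (Real.cos t) +
        3 * Real.sin t * Real.cos t * q.derivative.derivative.eval (Real.cos t) +
        Real.sin t * q.derivative.eval (Real.cos t) := by
  rw [radialDeriv_succ, funext (radialDeriv_two q),
    ((((Real.hasDerivAt_sin t).fun_pow 2).fun_mul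
      (hasDerivAt_eval_cos q.derivative.derivative t)).fun_sub
      ((Real.hasDerivAt_cos t).fun_mul (hasDerivAt_eval_cos q.derivative t))).deriv]
  push_cast
  ring

lemma crossMat_smul (c : ℝ) (v : Fin 3 → ℝ) (i n : Fin 3) :
    crossMat (c • v) i n = c * crossMat v i n := by
  simp only [crossMat, Finset.mul_sum, Pi.smul_apply, smul_eq_mul]
  exact Finset.sum_congr rfl fun k _ => by ring

lemma zonalDeriv_axisRot (n : Fin 3) (he : ∑ i, e i ^ 2 = 1) :
    zonalDeriv q n (axisRot t e) = e n * radialDeriv q 1 t := by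
  rw [zonalDeriv, cosRotAngle_axisRot he, radialDeriv_one, axisRot, halfTrace_quatMat_Lgen,
    sin_eq_two_mul_half t, Pi.smul_apply, smul_eq_mul]
  ring

variable {t}

lemma zonalDerivTwo_axisRot (i n : Fin 3) (he : ∑ i, e i ^ 2 = 1) (ht : Real.sin (t / 2) ≠ 0) :
    zonalDerivTwo q i n (axisRot t e) =
      (radialDeriv q 2 t - halfCot t * radialDeriv q 1 t) * (e i * e n) +
        halfCot t * radialDeriv q 1 t * (if i = n then 1 else 0) +
        radialDeriv q 1 t / 2 * crossMat e i n := by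
  rw [zonalDerivTwo, cosRotAngle_axisRot he, radialDeriv_one, radialDeriv_two, axisRot,
    halfTrace_quatMat_Lgen, halfTrace_quatMat_Lgen, halfTrace_quatMat_Lgen_mul, crossMat_smul,
    halfCot, Pi.smul_apply, Pi.smul_apply, smul_eq_mul, smul_eq_mul]
  generalize q.derivative.derivative.eval (Real.cos t) = q₂
  generalize q.derivative.eval (Real.cos t) = q₁
  rw [sin_eq_two_mul_half t, cos_eq_cos_half_sq_sub t]
  split_ifs <;> field_simp <;> ring

lemma sum_eps3_mul_zonalDerivTwo_axisRot (j i k : Fin 3) (he : ∑ i, e i ^ 2 = 1) :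
    ∑ n, eps3 j i n * zonalDerivTwo q n k (axisRot t e) =
      q.derivative.derivative.eval (Real.cos t) *
        (-2 * Real.cos (t / 2) * (Real.sin (t / 2) * crossMat e j i)) *
          halfTrace (axisRot t e) (Lgen k) +
      q.derivative.eval (Real.cos t) *
        ∑ n, eps3 j i n * halfTrace (axisRot t e) (Lgen n * Lgen k) := by
  simp only [zonalDerivTwo, cosRotAngle_axisRot he, crossMat, Finset.mul_sum,
    Finset.sum_mul, ← Finset.sum_add_distrib]
  refine Finset.sum_congr rfl fun n _ => ?_
  rw [axisRot, halfTrace_quatMat_Lgen, Pi.smul_apply, smul_eq_mul]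
  ring

lemma zonalDerivThree_sub_axisRot (j i k : Fin 3) (he : ∑ i, e i ^ 2 = 1)
    (ht : Real.sin (t / 2) ≠ 0) :
    zonalDerivThree q j i k (axisRot t e) -
        (∑ n, eps3 j i n * zonalDerivTwo q n k (axisRot t e)) / 2 =
      radialDeriv q 3 t * (e j * e i * e k) -
        halfCot t * (radialDeriv q 2 t - halfCot t * radialDeriv q 1 t) *
          (3 * (e j * e i * e k) - ((if j = i then e k else 0) + (if j = k then e i else 0) +
            (if i = k then e j else 0))) +
        radialDeriv q 1 t / 4 * (e j * e i * e k - (if j = i then e k else 0)) +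
        (radialDeriv q 2 t - halfCot t * radialDeriv q 1 t) / 2 *
          (crossMat e j k * e i + crossMat e i k * e j) := by
  rw [sum_eps3_mul_zonalDerivTwo_axisRot q j i k he, zonalDerivThree, cosRotAngle_axisRot he,
    radialDeriv_one, radialDeriv_two, radialDeriv_three, axisRot, halfTrace_quatMat_Lgen_mul_mul]
  generalize ∑ n, eps3 j i n * halfTrace (quatMat (Real.cos (t / 2)) (Real.sin (t / 2) • e))
    (Lgen n * Lgen k) = commutator
  simp only [halfTrace_quatMat_Lgen, halfTrace_quatMat_Lgen_mul, crossMat_smul, halfCot,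
    Pi.smul_apply, smul_eq_mul]
  generalize q.derivative.derivative.derivative.eval (Real.cos t) = q₃
  generalize q.derivative.derivative.eval (Real.cos t) = q₂
  generalize q.derivative.eval (Real.cos t) = q₁
  rw [sin_eq_two_mul_half t, cos_eq_cos_half_sq_sub t]
  generalize crossMat e j i = wji
  generalize crossMat e i k = wik
  generalize crossMat e j k = wjk
  split_ifs <;> field_simp <;> ring

end

/-! ### Pointwise bounds for zonal functions -/

section

variable {ι : Type*} [Fintype ι] {e : ι → ℝ}

lemma sq_le_one_of_sum_sq_eq_one (he : ∑ i, e i ^ 2 = 1) (i : ι) : e i ^ 2 ≤ 1 :=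
  he ▸ Finset.single_le_sum (f := fun i => e i ^ 2) (fun _ _ => sq_nonneg _) (Finset.mem_univ i)

lemma abs_le_one_of_sum_sq_eq_one (he : ∑ i, e i ^ 2 = 1) (i : ι) : |e i| ≤ 1 :=
  (sq_le_one_iff_abs_le_one _).mp (sq_le_one_of_sum_sq_eq_one he i)

lemma abs_mul_mul_le_one_of_sum_sq_eq_one (he : ∑ i, e i ^ 2 = 1) (j i k : ι) :
    |e j * e i * e k| ≤ 1 := by
  have h := abs_le_one_of_sum_sq_eq_one he
  rw [abs_mul, abs_mul]
  exact mul_le_one₀ (mul_le_one₀ (h j) (abs_nonneg _) (h i)) (abs_nonneg _) (h k)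

lemma sq_add_sq_le_one_of_sum_sq_eq_one (he : ∑ i, e i ^ 2 = 1) {i n : ι} (hin : i ≠ n) :
    e i ^ 2 + e n ^ 2 ≤ 1 := by
  classical
  rw [← he, ← Finset.sum_pair (f := fun i => e i ^ 2) hin]
  exact Finset.sum_le_univ_sum_of_nonneg fun _ => sq_nonneg _

lemma sq_add_sq_add_sq_le_one_of_sum_sq_eq_one (he : ∑ i, e i ^ 2 = 1) {j i k : ι} (hji : j ≠ i)
    (hjk : j ≠ k) (hik : i ≠ k) : e j ^ 2 + e i ^ 2 + e k ^ 2 ≤ 1 := by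
  classical
  rw [← he, add_assoc, ← Finset.sum_pair (f := fun i => e i ^ 2) hik,
    ← Finset.sum_insert (f := fun i => e i ^ 2) (by simp [hji, hjk])]
  exact Finset.sum_le_univ_sum_of_nonneg fun _ => sq_nonneg _

lemma abs_mul_le_half_of_sum_sq_eq_one (he : ∑ i, e i ^ 2 = 1) {i n : ι} (hin : i ≠ n) :
    |e i * e n| ≤ 1 / 2 := by
  have h := sq_add_sq_le_one_of_sum_sq_eq_one he hin
  rw [abs_le]
  constructor <;> nlinarith [sq_nonneg (e i + e n), sq_nonneg (e i - e n)]

lemma abs_mul_mul_sub_le_one_of_sum_sq_eq_one [DecidableEq ι] (he : ∑ i, e i ^ 2 = 1)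
    (j i k : ι) :
    |e j * e i * e k - (if j = i then e k else 0)| ≤ 1 := by
  split_ifs with hji
  · subst hji
    rw [show e j * e j * e k - e k = -((1 - e j ^ 2) * e k) by ring, abs_neg, abs_mul]
    refine mul_le_one₀ ?_ (abs_nonneg _) (abs_le_one_of_sum_sq_eq_one he k)
    rw [abs_le]
    constructor <;> linarith [sq_le_one_of_sum_sq_eq_one he j, sq_nonneg (e j)]
  · rw [sub_zero]
    exact abs_mul_mul_le_one_of_sum_sq_eq_one he j i k

end

section

variable {a b c : ℝ}

lemma abs_mul_one_sub_sq_le (ha : a ^ 2 ≤ 1) : |a * (1 - a ^ 2)| ≤ 0.4 := by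
  have ha1 := (sq_le_one_iff_abs_le_one _).mp ha
  rw [abs_mul, abs_of_nonneg (sub_nonneg.mpr ha), ← sq_abs]
  -- the maximum is attained at `|a| = 1 / √3 ≈ 0.577`
  nlinarith [mul_nonneg (sq_nonneg (|a| - 0.577)) (by positivity : 0 ≤ |a| + 1.154)]

lemma abs_three_mul_cube_sub_le (h : a ^ 2 ≤ 1) : |3 * (a * a * a) - (a + a + a)| ≤ 1.2 := by
  rw [show 3 * (a * a * a) - (a + a + a) = -(3 * (a * (1 - a ^ 2))) by ring, abs_neg, abs_mul,
    abs_of_pos three_pos]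
  linarith [abs_mul_one_sub_sq_le h]

lemma abs_three_mul_sq_mul_sub_le (h : a ^ 2 + b ^ 2 ≤ 1) : |3 * (a * a * b) - b| ≤ 1.2 := by
  have ha := sq_nonneg a
  have hb0 := sq_nonneg b
  have hb := abs_mul_one_sub_sq_le (a := b) (by linarith)
  have hb1 : |b| ≤ 1 := (sq_le_one_iff_abs_le_one _).mp (by linarith)
  rw [abs_mul, abs_of_nonneg (by linarith : 0 ≤ 1 - b ^ 2)] at hb
  have h1 := mul_le_mul_of_nonneg_left (by linarith : 3 * a ^ 2 - 1 ≤ 2 * (1 - b ^ 2))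
    (abs_nonneg b)
  have h2 := mul_le_mul_of_nonneg_left (by linarith : -(3 * a ^ 2 - 1) ≤ 1) (abs_nonneg b)
  rw [show 3 * (a * a * b) - b = b * (3 * a ^ 2 - 1) by ring, abs_mul]
  rcases abs_choice (3 * a ^ 2 - 1) with h3 | h3 <;> rw [h3] <;> linarith

lemma abs_three_mul_mul_mul_le (h : a ^ 2 + b ^ 2 + c ^ 2 ≤ 1) : |3 * (a * b * c)| ≤ 1.2 := by
  have hc := abs_mul_one_sub_sq_le (a := c) (by linarith [sq_nonneg a, sq_nonneg b])
  rw [abs_mul, abs_of_nonneg (by linarith [sq_nonneg a, sq_nonneg b] : 0 ≤ 1 - c ^ 2)] at hc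
  have hab : |a * b| ≤ (1 - c ^ 2) / 2 := by
    rw [abs_le]
    constructor <;> nlinarith [sq_nonneg (a + b), sq_nonneg (a - b)]
  rw [abs_mul, abs_mul (a * b), abs_of_pos three_pos]
  linarith [mul_le_mul_of_nonneg_right hab (abs_nonneg c)]

end

lemma abs_cubic_harmonic_le {ι : Type*} [Fintype ι] [DecidableEq ι] {e : ι → ℝ}
    (he : ∑ i, e i ^ 2 = 1) (j i k : ι) :
    |3 * (e j * e i * e k) - ((if j = i then e k else 0) + (if j = k then e i else 0) +
      (if i = k then e j else 0))| ≤ 1.2 := by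
  rcases eq_or_ne j i with rfl | hji
  · rcases eq_or_ne j k with rfl | hjk
    · simpa using abs_three_mul_cube_sub_le (sq_le_one_of_sum_sq_eq_one he j)
    · simpa [hjk] using abs_three_mul_sq_mul_sub_le (sq_add_sq_le_one_of_sum_sq_eq_one he hjk)
  · rcases eq_or_ne j k with rfl | hjk
    · have := abs_three_mul_sq_mul_sub_le (sq_add_sq_le_one_of_sum_sq_eq_one he hji)
      rw [mul_right_comm] at this
      simpa [hji, hji.symm] using this
    · rcases eq_or_ne i k with rfl | hik
      · have := abs_three_mul_sq_mul_sub_le (sq_add_sq_le_one_of_sum_sq_eq_one he hji.symm)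
        rw [mul_rotate] at this
        simpa [hji, mul_comm, mul_left_comm, mul_assoc] using this
      · simpa [hji, hjk, hik] using
          abs_three_mul_mul_mul_le (sq_add_sq_add_sq_le_one_of_sum_sq_eq_one he hji hjk hik)

section

variable {e : Fin 3 → ℝ}

lemma crossMat_self (i : Fin 3) : crossMat e i i = 0 := by
  fin_cases i <;> simp [crossMat, eps3]

lemma crossMat_eq_of_ne {i j n : Fin 3} (hij : i ≠ j) (hjn : j ≠ n) (hin : i ≠ n) :
    crossMat e j i = eps3 j i n * e n := by
  fin_cases i <;> fin_cases j <;> fin_cases n <;> simp at hij hjn hin <;> simp [crossMat, eps3]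

lemma abs_crossMat_le_one (he : ∑ i, e i ^ 2 = 1) (i n : Fin 3) : |crossMat e i n| ≤ 1 := by
  have h := abs_le_one_of_sum_sq_eq_one he
  fin_cases i <;> fin_cases n <;> simp [crossMat, eps3, h]

lemma abs_crossMat_mul_add_le_one (he : ∑ i, e i ^ 2 = 1) (j i k : Fin 3) :
    |crossMat e j k * e i + crossMat e i k * e j| ≤ 1 := by
  rw [Fin.sum_univ_three] at he
  rw [abs_le]
  fin_cases j <;> fin_cases i <;> fin_cases k <;> constructor <;> simp [crossMat, eps3] <;>
    linarith [sq_nonneg (e 0), sq_nonneg (e 1), sq_nonneg (e 2),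
      sq_nonneg (e 0 + e 1), sq_nonneg (e 0 - e 1), sq_nonneg (e 0 + e 2), sq_nonneg (e 0 - e 2),
      sq_nonneg (e 1 + e 2), sq_nonneg (e 1 - e 2)]

end

section

variable {t : ℝ}

lemma sin_half_pos (h0 : 0 < t) (hπ : t ≤ π) : 0 < Real.sin (t / 2) :=
  Real.sin_pos_of_pos_of_lt_pi (by linarith) (by linarith)

lemma halfCot_nonneg (h0 : 0 < t) (hπ : t ≤ π) : 0 ≤ halfCot t :=
  div_nonneg (Real.cos_nonneg_of_neg_pi_div_two_le_of_le (by linarith) (by linarith))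
    (mul_nonneg two_pos.le (sin_half_pos h0 hπ).le)

lemma halfCot_le_inv (h0 : 0 < t) (hπ : t ≤ π) : halfCot t ≤ t⁻¹ := by
  rw [halfCot, div_le_iff₀ (mul_pos two_pos (sin_half_pos h0 hπ)), inv_mul_eq_div,
    le_div_iff₀ h0]
  rcases hπ.lt_or_eq with h | rfl
  · have htan := Real.lt_tan (x := t / 2) (by linarith) (by linarith)
    rw [Real.tan_eq_sin_div_cos,
      lt_div_iff₀ (Real.cos_pos_of_mem_Ioo ⟨by linarith, by linarith⟩)] at htan
    linarith
  · rw [Real.cos_pi_div_two, Real.sin_pi_div_two]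
    norm_num

end

section

variable (q : ℝ[X]) {t : ℝ} {e : Fin 3 → ℝ}

lemma abs_radialDeriv_two_sub_le (h0 : 0 < t) (hπ : t ≤ π) :
    |radialDeriv q 2 t - halfCot t * radialDeriv q 1 t| ≤
      |radialDeriv q 2 t| + halfCot t * |radialDeriv q 1 t| := by
  refine (abs_sub _ _).trans_eq ?_
  rw [abs_mul, abs_of_nonneg (halfCot_nonneg h0 hπ)]

lemma abs_zonalDeriv_axisRot_le (n : Fin 3) (he : ∑ i, e i ^ 2 = 1) :
    |zonalDeriv q n (axisRot t e)| ≤ |radialDeriv q 1 t| := by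
  rw [zonalDeriv_axisRot q t n he, abs_mul]
  exact mul_le_of_le_one_left (abs_nonneg _) (abs_le_one_of_sum_sq_eq_one he n)

lemma abs_zonalDerivTwo_self_axisRot_le (i : Fin 3) (he : ∑ i, e i ^ 2 = 1) (h0 : 0 < t)
    (hπ : t ≤ π) :
    |zonalDerivTwo q i i (axisRot t e)| ≤
      max |radialDeriv q 2 t| (halfCot t * |radialDeriv q 1 t|) := by
  have hconvex : zonalDerivTwo q i i (axisRot t e) =
      e i ^ 2 * radialDeriv q 2 t + (1 - e i ^ 2) * (halfCot t * radialDeriv q 1 t) := by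
    rw [zonalDerivTwo_axisRot q i i he (sin_half_pos h0 hπ).ne', crossMat_self, if_pos rfl]
    ring
  have hei := sub_nonneg.mpr (sq_le_one_of_sum_sq_eq_one he i)
  rw [hconvex]
  refine (abs_add_le _ _).trans ?_
  rw [abs_mul, abs_mul, abs_mul, abs_of_nonneg (sq_nonneg _), abs_of_nonneg hei,
    abs_of_nonneg (halfCot_nonneg h0 hπ)]
  calc e i ^ 2 * |radialDeriv q 2 t| + (1 - e i ^ 2) * (halfCot t * |radialDeriv q 1 t|)
      ≤ e i ^ 2 * max |radialDeriv q 2 t| (halfCot t * |radialDeriv q 1 t|) +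
        (1 - e i ^ 2) * max |radialDeriv q 2 t| (halfCot t * |radialDeriv q 1 t|) := by
        gcongr
        exacts [le_max_left _ _, le_max_right _ _]
    _ = max |radialDeriv q 2 t| (halfCot t * |radialDeriv q 1 t|) := by ring

lemma abs_zonalDerivTwo_axisRot_le_of_ne {i n : Fin 3} (hin : i ≠ n) (he : ∑ i, e i ^ 2 = 1)
    (h0 : 0 < t) (hπ : t ≤ π) :
    |zonalDerivTwo q i n (axisRot t e)| ≤
      (|radialDeriv q 2 t| + halfCot t * |radialDeriv q 1 t|) / 2 + |radialDeriv q 1 t| / 2 := by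
  rw [zonalDerivTwo_axisRot q i n he (sin_half_pos h0 hπ).ne', if_neg hin, mul_zero, add_zero]
  refine (abs_add_le _ _).trans (add_le_add ?_ ?_)
  · rw [abs_mul, div_eq_mul_one_div (_ + _)]
    exact mul_le_mul (abs_radialDeriv_two_sub_le q h0 hπ) (abs_mul_le_half_of_sum_sq_eq_one he hin)
      (abs_nonneg _) ((abs_nonneg _).trans (abs_radialDeriv_two_sub_le q h0 hπ))
  · rw [abs_mul, abs_div, abs_two]
    exact mul_le_of_le_one_right (by positivity) (abs_crossMat_le_one he i n)

/-- Subtracting the multiple of the first derivative removes the antisymmetric part of the mixed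
second derivative. -/
lemma abs_zonalDerivTwo_sub_axisRot_le {i j n : Fin 3} (hij : i ≠ j) (hjn : j ≠ n) (hin : i ≠ n)
    (he : ∑ i, e i ^ 2 = 1) (h0 : 0 < t) (hπ : t ≤ π) :
    |zonalDerivTwo q j i (axisRot t e) - eps3 j i n / 2 * zonalDeriv q n (axisRot t e)| ≤
      (|radialDeriv q 2 t| + halfCot t * |radialDeriv q 1 t|) / 2 := by
  have hsymm : zonalDerivTwo q j i (axisRot t e) - eps3 j i n / 2 * zonalDeriv q n (axisRot t e) =
      (radialDeriv q 2 t - halfCot t * radialDeriv q 1 t) * (e j * e i) := by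
    rw [zonalDerivTwo_axisRot q j i he (sin_half_pos h0 hπ).ne', zonalDeriv_axisRot q t n he,
      crossMat_eq_of_ne hij hjn hin, if_neg hij.symm]
    ring
  rw [hsymm, abs_mul, div_eq_mul_one_div]
  exact mul_le_mul (abs_radialDeriv_two_sub_le q h0 hπ)
    (abs_mul_le_half_of_sum_sq_eq_one he hij.symm) (abs_nonneg _)
    ((abs_nonneg _).trans (abs_radialDeriv_two_sub_le q h0 hπ))

lemma abs_zonalDerivThree_sub_axisRot_le (j i k : Fin 3) (he : ∑ i, e i ^ 2 = 1) (h0 : 0 < t)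
    (hπ : t ≤ π) :
    |zonalDerivThree q j i k (axisRot t e) -
        (∑ n, eps3 j i n * zonalDerivTwo q n k (axisRot t e)) / 2| ≤
      |radialDeriv q 3 t| +
        halfCot t * (|radialDeriv q 2 t| + halfCot t * |radialDeriv q 1 t|) * 1.2 +
        |radialDeriv q 1 t| / 4 +
        (|radialDeriv q 2 t| + halfCot t * |radialDeriv q 1 t|) / 2 := by
  have hκ := halfCot_nonneg h0 hπ
  rw [zonalDerivThree_sub_axisRot q j i k he (sin_half_pos h0 hπ).ne']
  refine (abs_add_le _ _).trans (add_le_add ((abs_add_le _ _).trans (add_le_add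
    ((abs_sub _ _).trans (add_le_add ?_ ?_)) ?_)) ?_)
  · rw [abs_mul]
    exact mul_le_of_le_one_right (abs_nonneg _) (abs_mul_mul_le_one_of_sum_sq_eq_one he j i k)
  · rw [abs_mul, abs_mul, abs_of_nonneg hκ]
    gcongr
    exacts [abs_radialDeriv_two_sub_le q h0 hπ, abs_cubic_harmonic_le he j i k]
  · rw [abs_mul, abs_div, Nat.abs_ofNat]
    exact mul_le_of_le_one_right (by positivity)
      (abs_mul_mul_sub_le_one_of_sum_sq_eq_one he j i k)
  · rw [abs_mul, abs_div, abs_two]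
    refine (mul_le_of_le_one_right (by positivity) (abs_crossMat_mul_add_le_one he j i k)).trans ?_
    gcongr
    exact abs_radialDeriv_two_sub_le q h0 hπ

end

/-! ### Pointwise bounds for the kernel `sigmaK` -/

/-- `f` is the zonal kernel on the rotation group with profile `q ∘ cos`. The rotation angle itself
is not differentiable at its extreme values, whereas its cosine is smooth. -/
def IsZonalKernel (q : ℝ[X]) (f : Mat3 → Mat3 → ℝ) : Prop :=
  ∀ x y, IsSO3 x → IsSO3 y → f x y = q.eval (cosRotAngle (y.transpose * x))

namespace IsZonalKernel

variable {q : ℝ[X]} {f : Mat3 → Mat3 → ℝ} {x y : Mat3}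

lemma Xx_eq (hf : IsZonalKernel q f) (i : Fin 3) (hx : IsSO3 x) (hy : IsSO3 y) :
    Xx i f x y = zonalDeriv q i (y.transpose * x) :=
  Xx_eq_of_hasDerivAt (G := fun z => q.eval (cosRotAngle z)) hf
    (fun z => hasDerivAt_eval_cosRotAngle_mul_exp q z (Lgen i)) x y hx hy

lemma Xy_eq (hf : IsZonalKernel q f) (n : Fin 3) (hx : IsSO3 x) (hy : IsSO3 y) :
    Xy n f x y = -zonalDeriv q n (y.transpose * x) := by
  have hcomm : (fun t : ℝ => f x (y * NormedSpace.exp (t • Lgen n))) =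
      fun t => q.eval (cosRotAngle (y.transpose * x * NormedSpace.exp (-t • Lgen n))) := by
    funext t
    rw [hf x _ hx (hy.mul (isSO3_exp_Lgen t n)), Matrix.transpose_mul, transpose_exp_Lgen,
      cosRotAngle, cosRotAngle, Matrix.mul_assoc, Matrix.trace_mul_comm (NormedSpace.exp _)]
  have h := hasDerivAt_eval_cosRotAngle_mul_exp q (y.transpose * x) (Lgen n)
  rw [Xy, hcomm, deriv_comp_neg
    (fun t : ℝ => q.eval (cosRotAngle (y.transpose * x * NormedSpace.exp (t • Lgen n)))),
    neg_zero, h.deriv, zonalDeriv]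

lemma Xx_Xx_eq (hf : IsZonalKernel q f) (i n : Fin 3) (hx : IsSO3 x) (hy : IsSO3 y) :
    Xx i (Xx n f) x y = zonalDerivTwo q i n (y.transpose * x) :=
  Xx_eq_of_hasDerivAt (fun _ _ => hf.Xx_eq n) (hasDerivAt_zonalDeriv q i n) x y hx hy

lemma Xx_Xy_eq (hf : IsZonalKernel q f) (i n : Fin 3) (hx : IsSO3 x) (hy : IsSO3 y) :
    Xx i (Xy n f) x y = -zonalDerivTwo q i n (y.transpose * x) :=
  Xx_eq_of_hasDerivAt (G := fun z => -zonalDeriv q n z) (G' := fun z => -zonalDerivTwo q i n z)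
    (fun _ _ => hf.Xy_eq n) (fun z => (hasDerivAt_zonalDeriv q i n z).fun_neg) x y hx hy

lemma Xx_Xx_Xy_eq (hf : IsZonalKernel q f) (j i n : Fin 3) (hx : IsSO3 x) (hy : IsSO3 y) :
    Xx j (Xx i (Xy n f)) x y = -zonalDerivThree q j i n (y.transpose * x) :=
  Xx_eq_of_hasDerivAt (G := fun z => -zonalDerivTwo q i n z)
    (G' := fun z => -zonalDerivThree q j i n z) (fun _ _ => hf.Xx_Xy_eq i n)
    (fun z => (hasDerivAt_zonalDerivTwo q j i n z).fun_neg) x y hx hy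

end IsZonalKernel

/-- The polynomial in the cosine that represents the trigonometric polynomial `sigmaT s N`. -/
noncomputable def sigmaPoly (s N : ℕ) : ℝ[X] :=
  C (1 / gnorm s N) * ∑ k ∈ Finset.Icc (-(N : ℤ)) (N : ℤ),
    C (gtilde s ((k : ℝ) / (2 * ((N : ℝ) + 1)))) * Chebyshev.T ℝ k

lemma eval_cos_sigmaPoly (s N : ℕ) (t : ℝ) :
    (sigmaPoly s N).eval (Real.cos t) = sigmaT s N t := by
  rw [sigmaPoly, sigmaT, eval_mul, eval_C, eval_finsetSum, ← Complex.ofReal_one,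
    ← Complex.ofReal_div, Complex.re_ofReal_mul, Complex.re_sum]
  congr 1
  refine Finset.sum_congr rfl fun k _ => ?_
  rw [eval_mul, eval_C, Chebyshev.T_real_cos, Complex.re_ofReal_mul, ← Complex.ofReal_intCast,
    ← Complex.ofReal_mul, Complex.exp_ofReal_mul_I_re]

lemma radialDeriv_sigmaPoly (s N l : ℕ) :
    radialDeriv (sigmaPoly s N) l = iteratedDeriv l (sigmaT s N) := by
  funext t
  simp only [radialDeriv, eval_cos_sigmaPoly]

lemma IsSO3.cos_rotAngle {z : Mat3} (hz : IsSO3 z) : Real.cos (rotAngle z) = cosRotAngle z := by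
  obtain ⟨e, he, hze⟩ := hz.exists_axisRot
  exact ((congrArg cosRotAngle hze).trans (cosRotAngle_axisRot he)).symm

lemma isZonalKernel_sigmaK (s N : ℕ) : IsZonalKernel (sigmaPoly s N) (sigmaK s N) := by
  intro x y hx hy
  rw [sigmaK, hy.inv_eq, ← eval_cos_sigmaPoly, (hy.transpose.mul hx).cos_rotAngle]

lemma rotAngle_nonneg (z : Mat3) : 0 ≤ rotAngle z := Real.arccos_nonneg _

lemma rotAngle_le_pi (z : Mat3) : rotAngle z ≤ π := Real.arccos_le_pi _

/-- The common decay factor of the kernel and its derivatives at distance `t`. -/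
noncomputable def decayWeight (s N : ℕ) (t : ℝ) : ℝ :=
  1.02 * (s - 1).factorial * 2 ^ (s - 1) / ((N + 1) * t) ^ s

section

variable {s N : ℕ} {t : ℝ}

lemma decayWeight_nonneg (ht : 0 ≤ t) : 0 ≤ decayWeight s N t := by
  rw [decayWeight]
  positivity

lemma cConst_div_eq {l : ℕ} {c : ℝ} (hs : s ≠ 0)
    (hc : cConst l s = 1.02 * (s - 1).factorial * 2 ^ s * c) :
    cConst l s / ((N + 1) * t) ^ s = 2 * c * decayWeight s N t := by
  obtain ⟨r, rfl⟩ := Nat.exists_eq_succ_of_ne_zero hs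
  rw [hc, decayWeight, Nat.succ_sub_one, Nat.succ_eq_add_one, pow_succ (2 : ℝ)]
  ring

lemma abs_radialDeriv_sigmaPoly_le (hs : 6 ≤ s) (hN : 2 * s ≤ N) {l : ℕ} (hl : l ≤ 3)
    (ht : 0 < t) (htπ : t ≤ π) :
    |radialDeriv (sigmaPoly s N) l t| ≤ decayConst l * s * (N + 1) ^ l * decayWeight s N t := by
  rw [radialDeriv_sigmaPoly]
  refine (abs_iteratedDeriv_sigmaT_le hs hN hl ht htπ).trans_eq ?_
  rw [decayWeight]
  ring

lemma pos_of_pi_div_two_le (hω : π / 2 ≤ (N + 1) * t) : 0 < t :=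
  pos_of_mul_pos_right (Real.pi_div_two_pos.trans_le hω) N.cast_add_one_pos.le

lemma halfCot_le_mul (hω : π / 2 ≤ (N + 1) * t) (htπ : t ≤ π) :
    halfCot t ≤ 0.637 * (N + 1) := by
  have h0 := pos_of_pi_div_two_le hω
  refine (halfCot_le_inv h0 htπ).trans ?_
  rw [inv_le_iff_one_le_mul₀ h0]
  linarith [Real.pi_gt_d4]

lemma halfCot_mul_abs_radialDeriv_sigmaPoly_le (hs : 6 ≤ s) (hN : 2 * s ≤ N)
    (hω : π / 2 ≤ (N + 1) * t) (htπ : t ≤ π) :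
    halfCot t * |radialDeriv (sigmaPoly s N) 1 t| ≤
      2.548 * s * (N + 1) ^ 2 * decayWeight s N t := by
  have h1 := abs_radialDeriv_sigmaPoly_le hs hN (l := 1) (by norm_num) (pos_of_pi_div_two_le hω) htπ
  refine (mul_le_mul (halfCot_le_mul hω htπ) h1 (abs_nonneg _) (by positivity)).trans_eq ?_
  rw [decayConst]
  ring

end

section

variable {s N : ℕ} {z : Mat3}

lemma abs_sigmaT_rotAngle_le (hs : 6 ≤ s) (hN : 2 * s ≤ N)
    (hω : π / 2 ≤ (N + 1) * rotAngle z) :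
    |sigmaT s N (rotAngle z)| ≤ cConst 0 s / ((N + 1) * rotAngle z) ^ s := by
  have h := abs_radialDeriv_sigmaPoly_le hs hN (l := 0) (by norm_num) (pos_of_pi_div_two_le hω)
    (rotAngle_le_pi z)
  rw [radialDeriv_sigmaPoly, iteratedDeriv_zero, pow_zero, mul_one, decayConst] at h
  rwa [cConst_div_eq (by omega) rfl]

lemma abs_zonalDeriv_sigmaPoly_le (hs : 6 ≤ s) (hN : 2 * s ≤ N) (hz : IsSO3 z)
    (hω : π / 2 ≤ (N + 1) * rotAngle z) (n : Fin 3) :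
    |zonalDeriv (sigmaPoly s N) n z| ≤
      cConst 1 s * (N + 1) / ((N + 1) * rotAngle z) ^ s := by
  obtain ⟨e, he, hze⟩ := hz.exists_axisRot
  have h := abs_zonalDeriv_axisRot_le (sigmaPoly s N) (t := rotAngle z) n he
  rw [← hze] at h
  rw [mul_div_right_comm, cConst_div_eq (by omega) rfl]
  refine (h.trans (abs_radialDeriv_sigmaPoly_le hs hN (by norm_num) (pos_of_pi_div_two_le hω)
    (rotAngle_le_pi z))).trans_eq ?_
  rw [decayConst]
  ring

lemma abs_zonalDerivTwo_self_sigmaPoly_le (hs : 6 ≤ s) (hN : 2 * s ≤ N) (hz : IsSO3 z)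
    (hω : π / 2 ≤ (N + 1) * rotAngle z) (i : Fin 3) :
    |zonalDerivTwo (sigmaPoly s N) i i z| ≤
      cConst 2 s * (N + 1) ^ 2 / ((N + 1) * rotAngle z) ^ s := by
  obtain ⟨e, he, hze⟩ := hz.exists_axisRot
  have h0 := pos_of_pi_div_two_le hω
  have hπ := rotAngle_le_pi z
  have h := abs_zonalDerivTwo_self_axisRot_le (sigmaPoly s N) i he h0 hπ
  have h1 := halfCot_mul_abs_radialDeriv_sigmaPoly_le hs hN hω hπ
  have h2 := abs_radialDeriv_sigmaPoly_le hs hN (l := 2) (by norm_num) h0 hπ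
  have hB : 0 ≤ (N + 1) ^ 2 * decayWeight s N (rotAngle z) :=
    mul_nonneg (by positivity) (decayWeight_nonneg h0.le)
  have hsB := mul_nonneg s.cast_nonneg hB
  rw [← hze] at h
  simp only [decayConst] at h2
  rw [mul_div_right_comm, cConst_div_eq (by omega) rfl]
  exact h.trans (max_le (by linarith) (by linarith))

lemma abs_zonalDerivTwo_sigmaPoly_le (hs : 6 ≤ s) (hN : 2 * s ≤ N) (hz : IsSO3 z)
    (hω : π / 2 ≤ (N + 1) * rotAngle z) (i n : Fin 3) :
    |zonalDerivTwo (sigmaPoly s N) i n z| ≤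
      cConst 2 s * (N + 1) ^ 2 / ((N + 1) * rotAngle z) ^ s := by
  rcases eq_or_ne i n with rfl | hin
  · exact abs_zonalDerivTwo_self_sigmaPoly_le hs hN hz hω i
  obtain ⟨e, he, hze⟩ := hz.exists_axisRot
  have h0 := pos_of_pi_div_two_le hω
  have hπ := rotAngle_le_pi z
  have h := abs_zonalDerivTwo_axisRot_le_of_ne (sigmaPoly s N) hin he h0 hπ
  have hκ := halfCot_mul_abs_radialDeriv_sigmaPoly_le hs hN hω hπ
  have h1 := abs_radialDeriv_sigmaPoly_le hs hN (l := 1) (by norm_num) h0 hπ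
  have h2 := abs_radialDeriv_sigmaPoly_le hs hN (l := 2) (by norm_num) h0 hπ
  have hB := decayWeight_nonneg (s := s) (N := N) h0.le
  have hB2 : 0 ≤ (N + 1) ^ 2 * decayWeight s N (rotAngle z) := by positivity
  have hsB2 := mul_nonneg s.cast_nonneg hB2
  have hsN : (2 * s : ℝ) ≤ N := by exact_mod_cast hN
  have hlow : 2 * s * ((N + 1) * decayWeight s N (rotAngle z)) ≤
      (N + 1) * ((N + 1) * decayWeight s N (rotAngle z)) := by
    gcongr
    linarith
  rw [← hze] at h
  simp only [decayConst] at h1 h2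
  rw [mul_div_right_comm, cConst_div_eq (by omega) rfl]
  linarith

lemma abs_zonalDerivTwo_sub_sigmaPoly_le (hs : 6 ≤ s) (hN : 2 * s ≤ N) (hz : IsSO3 z)
    (hω : π / 2 ≤ (N + 1) * rotAngle z) {i j n : Fin 3} (hij : i ≠ j) (hjn : j ≠ n)
    (hin : i ≠ n) :
    |zonalDerivTwo (sigmaPoly s N) j i z - eps3 j i n / 2 * zonalDeriv (sigmaPoly s N) n z| ≤
      cConst 2 s * (N + 1) ^ 2 / ((N + 1) * rotAngle z) ^ s := by
  obtain ⟨e, he, hze⟩ := hz.exists_axisRot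
  have h0 := pos_of_pi_div_two_le hω
  have hπ := rotAngle_le_pi z
  have h := abs_zonalDerivTwo_sub_axisRot_le (sigmaPoly s N) hij hjn hin he h0 hπ
  have hκ := halfCot_mul_abs_radialDeriv_sigmaPoly_le hs hN hω hπ
  have h2 := abs_radialDeriv_sigmaPoly_le hs hN (l := 2) (by norm_num) h0 hπ
  have hB : 0 ≤ (N + 1) ^ 2 * decayWeight s N (rotAngle z) :=
    mul_nonneg (by positivity) (decayWeight_nonneg h0.le)
  have hsB := mul_nonneg s.cast_nonneg hB
  rw [← hze] at h
  simp only [decayConst] at h2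
  rw [mul_div_right_comm, cConst_div_eq (by omega) rfl]
  linarith

lemma abs_zonalDerivThree_sub_sigmaPoly_le (hs : 6 ≤ s) (hN : 2 * s ≤ N) (hz : IsSO3 z)
    (hω : π / 2 ≤ (N + 1) * rotAngle z) (j i k : Fin 3) :
    |zonalDerivThree (sigmaPoly s N) j i k z -
        (∑ n, eps3 j i n * zonalDerivTwo (sigmaPoly s N) n k z) / 2| ≤
      1.2 * cConst 3 s * (N + 1) ^ 3 / ((N + 1) * rotAngle z) ^ s := by
  obtain ⟨e, he, hze⟩ := hz.exists_axisRot
  have h0 := pos_of_pi_div_two_le hω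
  have hπ := rotAngle_le_pi z
  have h := abs_zonalDerivThree_sub_axisRot_le (sigmaPoly s N) j i k he h0 hπ
  have hκ := halfCot_mul_abs_radialDeriv_sigmaPoly_le hs hN hω hπ
  have h1 := abs_radialDeriv_sigmaPoly_le hs hN (l := 1) (by norm_num) h0 hπ
  have h2 := abs_radialDeriv_sigmaPoly_le hs hN (l := 2) (by norm_num) h0 hπ
  have h3 := abs_radialDeriv_sigmaPoly_le hs hN (l := 3) (by norm_num) h0 hπ
  rw [← hze] at h
  simp only [decayConst] at h1 h2 h3
  have hB := decayWeight_nonneg (s := s) (N := N) h0.le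
  have hsR : (6 : ℝ) ≤ s := by exact_mod_cast hs
  have hsN : (2 * s : ℝ) ≤ N := by exact_mod_cast hN
  have hM := mul_le_mul (halfCot_le_mul hω hπ) (add_le_add h2 hκ)
    (add_nonneg (abs_nonneg _) (mul_nonneg (halfCot_nonneg h0 hπ) (abs_nonneg _))) (by positivity)
  rw [mul_div_right_comm, mul_div_assoc, cConst_div_eq (by omega) rfl]
  generalize decayWeight s N (rotAngle z) = B at *
  have hB3 : 0 ≤ (N + 1) ^ 3 * B := by positivity
  have hsB3 : 6 * ((N + 1) ^ 3 * B) ≤ s * ((N + 1) ^ 3 * B) := by gcongr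
  have hlow2 : 2 * s * ((N + 1) ^ 2 * B) ≤ (N + 1) * ((N + 1) ^ 2 * B) := by
    gcongr
    linarith
  have hlow1 : 2 * s * 13 * ((N + 1) * B) ≤ (N + 1) * (N + 1) * ((N + 1) * B) := by
    gcongr <;> linarith
  linarith

end

/-! ### The rotation vector -/

lemma antitoneOn_sin_div : AntitoneOn (fun x => Real.sin x / x) (Set.Ioc 0 π) := by
  have h := strictConcaveOn_sin_Icc.concaveOn.antitoneOn_slope_gt
    (Set.left_mem_Icc.mpr Real.pi_pos.le)
  refine (h.mono fun x hx => ⟨Set.Ioc_subset_Icc_self hx, hx.1⟩).congr fun x _ => ?_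
  simp [slope_def_field]

lemma hasDerivAt_cos_sqrt {w : ℝ} (hw : 0 < w) :
    HasDerivAt (fun w => Real.cos √w) (-(Real.sin √w / √w) / 2) w := by
  convert (Real.hasDerivAt_sqrt hw.ne').cos using 1
  field_simp

lemma convexOn_cos_sqrt : ConvexOn ℝ (Set.Icc 0 (π ^ 2)) (fun w => Real.cos √w) := by
  have hsqrt : ∀ w ∈ Set.Ioo 0 (π ^ 2), √w ∈ Set.Ioc 0 π := fun w hw =>
    ⟨Real.sqrt_pos.mpr hw.1, (Real.sqrt_le_left Real.pi_pos.le).mpr hw.2.le⟩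
  refine MonotoneOn.convexOn_of_deriv (convex_Icc _ _)
    (Real.continuous_cos.comp Real.continuous_sqrt).continuousOn ?_ ?_ <;> rw [interior_Icc]
  · exact fun w hw => (hasDerivAt_cos_sqrt hw.1).differentiableAt.differentiableWithinAt
  · intro w hw w' hw' hle
    have := antitoneOn_sin_div (hsqrt w hw) (hsqrt w' hw') (Real.sqrt_le_sqrt hle)
    rw [(hasDerivAt_cos_sqrt hw.1).deriv, (hasDerivAt_cos_sqrt hw'.1).deriv]
    linarith

/-- The Euclidean against the spherical law of cosines: positive curvature brings the endpoints
of two geodesics closer together. Both sides agree at `c = ±1`, the left one is convex in `c`, and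
the right one is affine. -/
lemma cos_sqrt_le {a b c : ℝ} (ha : a ∈ Set.Icc 0 (π / 2)) (hb : b ∈ Set.Icc 0 (π / 2))
    (hc : |c| ≤ 1) :
    Real.cos √(a ^ 2 + b ^ 2 - 2 * a * b * c) ≤
      Real.cos a * Real.cos b + Real.sin a * Real.sin b * c := by
  obtain ⟨ha₁, ha₂⟩ := ha
  obtain ⟨hb₁, hb₂⟩ := hb
  obtain ⟨hc₁, hc₂⟩ := abs_le.mp hc
  have hsub : (a - b) ^ 2 ∈ Set.Icc 0 (π ^ 2) :=
    ⟨sq_nonneg _, sq_le_sq' (by linarith) (by linarith)⟩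
  have hadd : (a + b) ^ 2 ∈ Set.Icc 0 (π ^ 2) :=
    ⟨sq_nonneg _, sq_le_sq' (by linarith) (by linarith)⟩
  have h := convexOn_cos_sqrt.2 hsub hadd (by linarith : 0 ≤ (1 + c) / 2)
    (by linarith : 0 ≤ (1 - c) / 2) (by ring)
  simp only [smul_eq_mul, Real.sqrt_sq_eq_abs, Real.cos_abs, Real.cos_sub, Real.cos_add] at h
  rw [show (1 + c) / 2 * (a - b) ^ 2 + (1 - c) / 2 * (a + b) ^ 2 =
    a ^ 2 + b ^ 2 - 2 * a * b * c by ring] at h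
  linarith

section

variable {t u : ℝ} {e f : Fin 3 → ℝ}

lemma trace_quatMat_mul_transpose (a b : ℝ) (v w : Fin 3 → ℝ) :
    Matrix.trace (quatMat a v * (quatMat b w).transpose) =
      4 * (a * b + ∑ i, v i * w i) ^ 2 - (a ^ 2 + ∑ i, v i ^ 2) * (b ^ 2 + ∑ i, w i ^ 2) := by
  simp only [Matrix.trace_fin_three, Matrix.mul_apply, Matrix.transpose_apply,
    Fin.sum_univ_three]
  simp [quatMat]
  ring

lemma cosRotAngle_axisRot_mul_transpose (he : ∑ i, e i ^ 2 = 1) (hf : ∑ i, f i ^ 2 = 1) :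
    cosRotAngle (axisRot t e * (axisRot u f).transpose) =
      2 * (Real.cos (t / 2) * Real.cos (u / 2) +
        Real.sin (t / 2) * Real.sin (u / 2) * ∑ i, e i * f i) ^ 2 - 1 := by
  rw [cosRotAngle, axisRot, axisRot, trace_quatMat_mul_transpose, cos_half_sq_add_sum_sq he,
    cos_half_sq_add_sum_sq hf, Finset.mul_sum]
  simp only [Pi.smul_apply, smul_eq_mul, mul_mul_mul_comm]
  ring

lemma abs_sum_mul_le_one {ι : Type*} [Fintype ι] {e f : ι → ℝ} (he : ∑ i, e i ^ 2 = 1)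
    (hf : ∑ i, f i ^ 2 = 1) : |∑ i, e i * f i| ≤ 1 := by
  have h := Finset.sum_mul_sq_le_sq_mul_sq Finset.univ e f
  rwa [he, hf, mul_one, sq_le_one_iff_abs_le_one] at h

lemma sum_mul_sub_mul_sq {ι : Type*} [Fintype ι] {e f : ι → ℝ} (he : ∑ i, e i ^ 2 = 1)
    (hf : ∑ i, f i ^ 2 = 1) (t u : ℝ) :
    ∑ i, (t * e i - u * f i) ^ 2 = t ^ 2 + u ^ 2 - 2 * t * u * ∑ i, e i * f i := by
  have h : ∀ i, (t * e i - u * f i) ^ 2 =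
      t ^ 2 * e i ^ 2 + u ^ 2 * f i ^ 2 - 2 * t * u * (e i * f i) := fun i => by ring
  simp only [h, Finset.sum_sub_distrib, Finset.sum_add_distrib, ← Finset.mul_sum, he, hf, mul_one]

lemma rotAngle_axisRot_mul_transpose_le (ht : t ∈ Set.Icc 0 π) (hu : u ∈ Set.Icc 0 π)
    (he : ∑ i, e i ^ 2 = 1) (hf : ∑ i, f i ^ 2 = 1) :
    rotAngle (axisRot t e * (axisRot u f).transpose) ≤ √(∑ i, (t * e i - u * f i) ^ 2) := by
  set r := √((t / 2) ^ 2 + (u / 2) ^ 2 - 2 * (t / 2) * (u / 2) * ∑ i, e i * f i) with hr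
  have hnorm : √(∑ i, (t * e i - u * f i) ^ 2) = 2 * r := by
    rw [hr, ← sum_mul_sub_mul_sq he hf, ← Real.sqrt_sq (zero_le_two (α := ℝ)), ← Real.sqrt_mul',
      Finset.mul_sum]
    · exact congrArg _ (Finset.sum_congr rfl fun i _ => by ring)
    · positivity
  rw [hnorm]
  rcases le_total π (2 * r) with h | h
  · exact (rotAngle_le_pi _).trans h
  have hcos := cos_sqrt_le (a := t / 2) (b := u / 2) ⟨by linarith [ht.1], by linarith [ht.2]⟩
    ⟨by linarith [hu.1], by linarith [hu.2]⟩ (abs_sum_mul_le_one he hf)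
  have hr₀ : 0 ≤ r := Real.sqrt_nonneg _
  have hcos₀ : 0 ≤ Real.cos r :=
    Real.cos_nonneg_of_neg_pi_div_two_le_of_le (by linarith [Real.pi_pos]) (by linarith)
  calc rotAngle (axisRot t e * (axisRot u f).transpose)
      = Real.arccos (cosRotAngle (axisRot t e * (axisRot u f).transpose)) := rfl
    _ ≤ Real.arccos (Real.cos (2 * r)) := by
        rw [cosRotAngle_axisRot_mul_transpose he hf, Real.cos_two_mul]
        gcongr
    _ = 2 * r := Real.arccos_cos (by positivity) h

end

lemma rotAngle_mem_Icc (z : Mat3) : rotAngle z ∈ Set.Icc 0 π :=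
  ⟨rotAngle_nonneg z, rotAngle_le_pi z⟩

lemma exists_rotationVector :
    ∃ L : Mat3 → EuclideanSpace ℝ (Fin 3), (∀ z, IsSO3 z → ‖L z‖ = rotAngle z) ∧
      ∀ z w, IsSO3 z → IsSO3 w → rotAngle (z * w.transpose) ≤ dist (L z) (L w) := by
  choose! e he hze using fun z (hz : IsSO3 z) => hz.exists_axisRot
  refine ⟨fun z => WithLp.toLp 2 (rotAngle z • e z), fun z hz => ?_, fun z w hz hw => ?_⟩
  · have h : ∑ i, (rotAngle z • e z) i ^ 2 = rotAngle z ^ 2 := by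
      simp only [Pi.smul_apply, smul_eq_mul, mul_pow, ← Finset.mul_sum, he z hz, mul_one]
    simp only [EuclideanSpace.norm_eq, Real.norm_eq_abs, sq_abs]
    rw [h, Real.sqrt_sq (rotAngle_nonneg z)]
  · have h := rotAngle_axisRot_mul_transpose_le (rotAngle_mem_Icc z) (rotAngle_mem_Icc w)
      (he z hz) (he w hw)
    rw [← hze z hz, ← hze w hw] at h
    simpa only [EuclideanSpace.dist_eq, Real.dist_eq, sq_abs, Pi.smul_apply, smul_eq_mul] using h

/-! ### Separated points in a normed space -/

lemma summable_one_div_succ_pow {k : ℕ} (hk : 2 ≤ k) :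
    Summable fun n : ℕ => (1 : ℝ) / ((n : ℝ) + 1) ^ k := by
  simpa using (summable_nat_add_iff 1).mpr (Real.summable_one_div_nat_pow.mpr hk)

lemma one_le_zetaNat {k : ℕ} (hk : 2 ≤ k) : 1 ≤ zetaNat k := by
  simpa [zetaNat] using
    (summable_one_div_succ_pow hk).sum_le_tsum {0} (fun _ _ => by positivity)

section

open Module Metric

lemma pairwiseDisjoint_ball_half {ι E : Type*} [PseudoMetricSpace E] {s : Set ι} {f : ι → E}
    {δ : ℝ} (hsep : s.Pairwise fun p q => δ ≤ dist (f p) (f q)) :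
    s.PairwiseDisjoint fun p => ball (f p) (δ / 2) :=
  hsep.imp fun _ _ h => ball_disjoint_ball (by rwa [add_halves])

lemma measureReal_ball_pos {E : Type*} [PseudoMetricSpace E] [ProperSpace E] [MeasurableSpace E]
    (μ : Measure E) [μ.IsOpenPosMeasure] [IsFiniteMeasureOnCompacts μ] (x : E) {r : ℝ}
    (hr : 0 < r) : 0 < μ.real (ball x r) :=
  ENNReal.toReal_pos (measure_ball_pos μ x hr).ne' measure_ball_lt_top.ne

variable {ι E : Type*} [NormedAddCommGroup E] [NormedSpace ℝ E] [FiniteDimensional ℝ E]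
  {P : Finset ι} {f : ι → E} {c : E} {δ : ℝ}

section

variable [MeasurableSpace E] [BorelSpace E] (μ : Measure E) [μ.IsAddHaarMeasure]

lemma measureReal_ball_of_pos (x : E) {r : ℝ} (hr : 0 < r) :
    μ.real (ball x r) = r ^ finrank ℝ E * μ.real (ball 0 1) := by
  rw [Measure.real, Measure.addHaar_ball_of_pos μ x hr, ENNReal.toReal_mul,
    ENNReal.toReal_ofReal (by positivity), Measure.real]

lemma card_mul_measureReal_ball_le {ρ : ℝ} (hρ : 0 < ρ)
    (hP : (P : Set ι).PairwiseDisjoint fun p => ball (f p) ρ) {S : Set E} (hS : μ S ≠ ⊤)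
    (hPS : ∀ p ∈ P, ball (f p) ρ ⊆ S) :
    P.card * ρ ^ finrank ℝ E * μ.real (ball 0 1) ≤ μ.real S := by
  calc P.card * ρ ^ finrank ℝ E * μ.real (ball 0 1)
      = ∑ p ∈ P, μ.real (ball (f p) ρ) := by
        simp only [measureReal_ball_of_pos μ _ hρ, Finset.sum_const, nsmul_eq_mul, mul_assoc]
    _ = μ.real (⋃ p ∈ P, ball (f p) ρ) := (measureReal_biUnion_finset hP
        (fun _ _ => measurableSet_ball) fun _ _ => measure_ball_lt_top.ne).symm
    _ ≤ μ.real S := measureReal_mono (Set.iUnion₂_subset hPS) hS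

end

lemma card_le_three_pow (hδ : 0 < δ)
    (hsep : (P : Set ι).Pairwise fun p q => δ ≤ dist (f p) (f q))
    (hP : ∀ p ∈ P, dist (f p) c < δ) : (P.card : ℝ) ≤ 3 ^ finrank ℝ E := by
  borelize E
  let μ : Measure E := Measure.addHaar
  have h := card_mul_measureReal_ball_le μ (half_pos hδ) (pairwiseDisjoint_ball_half hsep)
    (S := ball c (3 * (δ / 2))) measure_ball_lt_top.ne
    (fun p hp => ball_subset_ball' (by linarith [hP p hp]))
  rw [measureReal_ball_of_pos μ c (by positivity), mul_pow] at h
  exact le_of_mul_le_mul_right (le_of_mul_le_mul_right h (measureReal_ball_pos μ 0 one_pos))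
    (by positivity)

/-- The disjoint balls of radius `δ / 2` around the points fit into the shell about `c` with radii
`(m + 1/2) δ` and `(m + 5/2) δ`. -/
lemma card_add_pow_le_of_floor_dist (hδ : 0 < δ)
    (hsep : (P : Set ι).Pairwise fun p q => δ ≤ dist (f p) (f q)) {m : ℕ}
    (hP : ∀ p ∈ P, ⌊dist (f p) c / δ⌋₊ = m + 1) :
    (P.card : ℝ) + (2 * m + 1) ^ finrank ℝ E ≤ (2 * m + 5) ^ finrank ℝ E := by
  borelize E
  let μ : Measure E := Measure.addHaar
  have hdist : ∀ p ∈ P, (m + 1) * δ ≤ dist (f p) c ∧ dist (f p) c < (m + 2) * δ := by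
    intro p hp
    have h := (Nat.floor_eq_iff (by positivity)).mp (hP p hp)
    push_cast at h
    rw [le_div_iff₀ hδ, div_lt_iff₀ hδ] at h
    exact ⟨h.1, by linarith [h.2]⟩
  have hsub : ball c ((2 * m + 1) * (δ / 2)) ⊆ ball c ((2 * m + 5) * (δ / 2)) :=
    ball_subset_ball (by gcongr; norm_num)
  have h := card_mul_measureReal_ball_le μ (half_pos hδ) (pairwiseDisjoint_ball_half hsep)
    (S := ball c ((2 * m + 5) * (δ / 2)) \ ball c ((2 * m + 1) * (δ / 2)))
    (measure_ne_top_of_subset Set.sdiff_subset measure_ball_lt_top.ne) fun p hp =>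
      Set.subset_sdiff.mpr ⟨ball_subset_ball' (by linarith [(hdist p hp).2]),
        ball_disjoint_ball (by linarith [(hdist p hp).1])⟩
  rw [measureReal_sdiff hsub measurableSet_ball measure_ball_lt_top.ne,
    measureReal_ball_of_pos μ c (by positivity), measureReal_ball_of_pos μ c (by positivity),
    mul_pow, mul_pow, ← sub_mul, ← sub_mul] at h
  linarith [le_of_mul_le_mul_right (le_of_mul_le_mul_right h (measureReal_ball_pos μ 0 one_pos))
    (by positivity)]

lemma card_le_mul_sq_of_floor_dist (hE : finrank ℝ E = 3) (hδ : 0 < δ)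
    (hsep : (P : Set ι).Pairwise fun p q => δ ≤ dist (f p) (f q)) {m : ℕ}
    (hP : ∀ p ∈ P, ⌊dist (f p) c / δ⌋₊ = m + 1) : (P.card : ℝ) ≤ 124 * (m + 1) ^ 2 := by
  have h := card_add_pow_le_of_floor_dist hδ hsep hP
  rw [hE] at h
  nlinarith [(m.cast_nonneg : (0 : ℝ) ≤ m)]

variable {s : ℕ} {a : ℝ} {g : ι → ℝ}

lemma sum_one_div_pow_le_of_floor_dist (hE : finrank ℝ E = 3) (hs : 2 ≤ s) (hδ : 0 < δ)
    (hsep : (P : Set ι).Pairwise fun p q => δ ≤ dist (f p) (f q)) {m : ℕ}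
    (hP : ∀ p ∈ P, ⌊dist (f p) c / δ⌋₊ = m + 1) (ha : 0 < a)
    (hg : ∀ p ∈ P, a * ⌊dist (f p) c / δ⌋₊ ≤ g p) :
    ∑ p ∈ P, 1 / g p ^ s ≤ 124 / a ^ s * (1 / ((m : ℝ) + 1) ^ (s - 2)) := by
  obtain ⟨k, rfl⟩ := Nat.exists_eq_add_of_le' hs
  have hterm : ∀ p ∈ P, 1 / g p ^ (k + 2) ≤ 1 / (a * (m + 1)) ^ (k + 2) := by
    intro p hp
    have h := hg p hp
    rw [hP p hp, Nat.cast_succ] at h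
    gcongr
  calc ∑ p ∈ P, 1 / g p ^ (k + 2)
      ≤ P.card * (1 / (a * (m + 1)) ^ (k + 2)) := by
        simpa only [nsmul_eq_mul] using Finset.sum_le_card_nsmul _ _ _ hterm
    _ ≤ 124 * (m + 1) ^ 2 * (1 / (a * (m + 1)) ^ (k + 2)) := by
        gcongr
        exact card_le_mul_sq_of_floor_dist hE hδ hsep hP
    _ = 124 / a ^ (k + 2) * (1 / ((m : ℝ) + 1) ^ (k + 2 - 2)) := by
        rw [Nat.add_sub_cancel, mul_pow, pow_add ((m : ℝ) + 1)]
        field_simp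

lemma sum_one_div_pow_le (hE : finrank ℝ E = 3) (hs : 4 ≤ s) (hδ : 0 < δ)
    (hsep : (P : Set ι).Pairwise fun p q => δ ≤ dist (f p) (f q))
    (hP : ∀ p ∈ P, δ ≤ dist (f p) c) (ha : 0 < a)
    (hg : ∀ p ∈ P, a * ⌊dist (f p) c / δ⌋₊ ≤ g p) :
    ∑ p ∈ P, 1 / g p ^ s ≤ 124 * zetaNat (s - 2) / a ^ s := by
  classical
  set k : ι → ℕ := fun p => ⌊dist (f p) c / δ⌋₊ - 1
  have hk : ∀ p ∈ P, ⌊dist (f p) c / δ⌋₊ = k p + 1 := fun p hp =>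
    (Nat.sub_add_cancel (Nat.one_le_floor_iff _ |>.mpr ((one_le_div hδ).mpr (hP p hp)))).symm
  calc ∑ p ∈ P, 1 / g p ^ s
      = ∑ m ∈ P.image k, ∑ p ∈ P with k p = m, 1 / g p ^ s :=
        (Finset.sum_fiberwise_of_maps_to (fun _ => Finset.mem_image_of_mem k) _).symm
    _ ≤ ∑ m ∈ P.image k, 124 / a ^ s * (1 / ((m : ℝ) + 1) ^ (s - 2)) := by
        refine Finset.sum_le_sum fun m _ => ?_
        have hmem : ∀ p ∈ P.filter (k · = m), p ∈ P ∧ k p = m := fun p => Finset.mem_filter.mp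
        exact sum_one_div_pow_le_of_floor_dist hE (by omega) hδ
          (hsep.mono (Finset.coe_subset.mpr (Finset.filter_subset _ _)))
          (fun p hp => by rw [hk p (hmem p hp).1, (hmem p hp).2]) ha
          fun p hp => hg p (hmem p hp).1
    _ ≤ 124 / a ^ s * zetaNat (s - 2) := by
        rw [← Finset.mul_sum]
        gcongr
        exact (summable_one_div_succ_pow (by omega)).sum_le_tsum _ fun _ _ => by positivity
    _ = 124 * zetaNat (s - 2) / a ^ s := div_mul_eq_mul_div _ _ _

lemma sum_one_div_norm_pow_le_add (hE : finrank ℝ E = 3) (hs : 4 ≤ s) (hδ : 0 < δ)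
    (hsep : (P : Set ι).Pairwise fun p q => δ ≤ dist (f p) (f q)) {r : ℝ} (hr : 0 < r)
    (hP : ∀ p ∈ P, r ≤ ‖f p‖) :
    ∑ p ∈ P, 1 / ‖f p‖ ^ s ≤ 27 / r ^ s + 124 * zetaNat (s - 2) / δ ^ s := by
  have hsep' : ∀ Q ⊆ P, (Q : Set ι).Pairwise fun p q => δ ≤ dist (f p) (f q) :=
    fun Q hQ => hsep.mono (Finset.coe_subset.mpr hQ)
  have hnear : ∑ p ∈ P with ‖f p‖ < δ, 1 / ‖f p‖ ^ s ≤ 27 / r ^ s := by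
    have hcard := card_le_three_pow (c := 0) hδ (hsep' _ (Finset.filter_subset (‖f ·‖ < δ) P))
      fun p hp => (dist_zero_right (f p)).trans_lt (Finset.mem_filter.mp hp).2
    rw [hE] at hcard
    calc ∑ p ∈ P with ‖f p‖ < δ, 1 / ‖f p‖ ^ s
        ≤ {p ∈ P | ‖f p‖ < δ}.card * (1 / r ^ s) := by
          simpa only [nsmul_eq_mul] using Finset.sum_le_card_nsmul _ _ _ fun p hp =>
            one_div_le_one_div_of_le (pow_pos hr s)
              (pow_le_pow_left₀ hr.le (hP p (Finset.mem_filter.mp hp).1) s)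
      _ ≤ 3 ^ 3 * (1 / r ^ s) := by gcongr
      _ = 27 / r ^ s := by ring
  have hfar : ∑ p ∈ P with ¬‖f p‖ < δ, 1 / ‖f p‖ ^ s ≤ 124 * zetaNat (s - 2) / δ ^ s := by
    refine sum_one_div_pow_le hE (c := 0) hs hδ (hsep' _ (Finset.filter_subset _ P))
      (fun p hp => ?_) hδ fun p _ => ?_ <;> rw [dist_zero_right]
    · exact not_lt.mp (Finset.mem_filter.mp hp).2
    · exact (le_div_iff₀' hδ).mp (Nat.floor_le (by positivity))
  rw [← Finset.sum_filter_add_sum_filter_not P (‖f ·‖ < δ)]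
  exact add_le_add hnear hfar

/-- The two entries of the minimum come from counting the points in shells about the origin and
about `c`, respectively. -/
lemma sum_one_div_norm_pow_le (hE : finrank ℝ E = 3) (hs : 4 ≤ s) (hδ : 0 < δ)
    (hsep : (P : Set ι).Pairwise fun p q => δ ≤ dist (f p) (f q))
    (hP : ∀ p ∈ P, δ ≤ dist (f p) c) {ε : ℝ} (hε : ε < 1) (hc : ‖c‖ ≤ ε * δ) :
    ∑ p ∈ P, 1 / ‖f p‖ ^ s ≤
      124 * zetaNat (s - 2) * min ((27 / 124) * ((1 - ε) ^ s)⁻¹ + 1) (((1 - ε) ^ s)⁻¹) / δ ^ s := by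
  have hε' : 0 < 1 - ε := sub_pos.mpr hε
  have hεδ : 0 ≤ ε * δ := (norm_nonneg c).trans hc
  have hnorm : ∀ p, dist (f p) c - ε * δ ≤ ‖f p‖ := fun p => by
    rw [dist_eq_norm]
    linarith [norm_sub_le (f p) c]
  have hζ := one_le_zetaNat (k := s - 2) (by omega)
  rw [mul_min_of_nonneg _ _ (by positivity), ← min_div_div_right (by positivity)]
  refine le_min ?_ ?_
  · refine (sum_one_div_norm_pow_le_add hE hs hδ hsep (mul_pos hε' hδ) fun p hp => ?_).trans ?_
    · linarith [hnorm p, hP p hp]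
    · calc 27 / ((1 - ε) * δ) ^ s + 124 * zetaNat (s - 2) / δ ^ s
          ≤ zetaNat (s - 2) * (27 / ((1 - ε) * δ) ^ s) + 124 * zetaNat (s - 2) / δ ^ s := by
            gcongr
            exact le_mul_of_one_le_left (by positivity) hζ
        _ = 124 * zetaNat (s - 2) * (27 / 124 * ((1 - ε) ^ s)⁻¹ + 1) / δ ^ s := by
            rw [mul_pow]
            field_simp
  · refine (sum_one_div_pow_le hE hs hδ hsep hP (mul_pos hε' hδ) fun p hp => ?_).trans_eq ?_
    · have hfloor : (1 : ℝ) ≤ ⌊dist (f p) c / δ⌋₊ := by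
        exact_mod_cast Nat.one_le_floor_iff _ |>.mpr ((one_le_div hδ).mpr (hP p hp))
      have hle := (le_div_iff₀' hδ).mp (Nat.floor_le (by positivity : 0 ≤ dist (f p) c / δ))
      linarith [hnorm p, mul_le_mul_of_nonneg_right hfloor hεδ]
    · rw [mul_pow]
      field_simp

end

/-! ### Off-diagonal sums -/

lemma exists_relativeRotationVector {x : Mat3} (hx : IsSO3 x) :
    ∃ f : Mat3 → EuclideanSpace ℝ (Fin 3),
      (∀ p, IsSO3 p → ‖f p‖ = rotAngle (p.transpose * x)) ∧
      ∀ p q, IsSO3 p → IsSO3 q → rotAngle (q⁻¹ * p) ≤ dist (f p) (f q) := by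
  obtain ⟨L, hL, hLd⟩ := exists_rotationVector
  refine ⟨fun p => L (p.transpose * x), fun p hp => hL _ (hp.transpose.mul hx),
    fun p q hp hq => ?_⟩
  have hmul : q⁻¹ * p = q.transpose * x * (p.transpose * x).transpose := by
    rw [hq.inv_eq, Matrix.transpose_mul, Matrix.transpose_transpose, Matrix.mul_assoc,
      ← Matrix.mul_assoc x, hx.mul_transpose_self, Matrix.one_mul]
  rw [dist_comm, hmul]
  exact hLd _ _ (hq.transpose.mul hx) (hp.transpose.mul hx)

lemma sum_abs_le_of_decay {S : Finset Mat3} (hS : ∀ p ∈ S, IsSO3 p) {M ν : ℝ} (hM : 0 < M)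
    (hν : 0 < ν) (hsep : ∀ p ∈ S, ∀ q ∈ S, p ≠ q → ν / M ≤ rotAngle (q⁻¹ * p)) {y : Mat3}
    (hy : y ∈ S) {x : Mat3} (hx : IsSO3 x) {ε : ℝ} (hε : ε < 1)
    (hxy : rotAngle (y⁻¹ * x) ≤ ε * ν / M) {s : ℕ} (hs : 4 ≤ s) {τ : ℝ} (hτ : τ ≤ (1 - ε) * ν)
    {g : Mat3 → ℝ} {b : ℝ} (hb : 0 ≤ b)
    (hg : ∀ p, IsSO3 p → τ ≤ M * rotAngle (p.transpose * x) →
      |g p| ≤ b / (M * rotAngle (p.transpose * x)) ^ s) :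
    ∑ p ∈ S.erase y, |g p| ≤ 124 * b * zetaNat (s - 2) *
      min ((27 / 124) * ((1 - ε) ^ s)⁻¹ + 1) (((1 - ε) ^ s)⁻¹) / ν ^ s := by
  obtain ⟨f, hf, hfd⟩ := exists_relativeRotationVector hx
  have hdist : ∀ p ∈ S, ∀ q ∈ S, p ≠ q → ν / M ≤ dist (f p) (f q) := fun p hp q hq hpq =>
    (hsep p hp q hq hpq).trans (hfd p q (hS p hp) (hS q hq))
  have hfy : ‖f y‖ ≤ ε * (ν / M) := by
    rwa [hf y (hS y hy), ← (hS y hy).inv_eq, ← mul_div_assoc]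
  have hmem : ∀ p ∈ S.erase y, p ∈ S ∧ ν / M ≤ dist (f p) (f y) := fun p hp =>
    have hpS := Finset.mem_of_mem_erase hp
    ⟨hpS, hdist p hpS y hy (Finset.ne_of_mem_erase hp)⟩
  have hterm : ∀ p ∈ S.erase y, |g p| ≤ b / M ^ s * (1 / ‖f p‖ ^ s) := by
    intro p hp
    obtain ⟨hpS, hpy⟩ := hmem p hp
    have hfar : (1 - ε) * (ν / M) ≤ ‖f p‖ := by
      linarith [dist_eq_norm (f p) (f y), norm_sub_le (f p) (f y)]
    rw [← mul_div_assoc, div_le_iff₀' hM, hf p (hS p hpS)] at hfar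
    refine (hg p (hS p hpS) (hτ.trans hfar)).trans_eq ?_
    rw [hf p (hS p hpS), mul_pow, div_mul_div_comm, mul_one]
  have hpack := sum_one_div_norm_pow_le finrank_euclideanSpace_fin hs (div_pos hν hM)
    (fun p hp q hq => hdist p (hmem p hp).1 q (hmem q hq).1) (fun p hp => (hmem p hp).2) hε hfy
  calc ∑ p ∈ S.erase y, |g p| ≤ b / M ^ s * ∑ p ∈ S.erase y, 1 / ‖f p‖ ^ s := by
        rw [Finset.mul_sum]
        exact Finset.sum_le_sum hterm
    _ ≤ _ := mul_le_mul_of_nonneg_left hpack (by positivity)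
    _ = _ := by
        rw [div_pow]
        field_simp

lemma cConst_nonneg {s : ℕ} (hs : 1 ≤ s) (l : ℕ) : 0 ≤ cConst l s := by
  have hsR : (1 : ℝ) ≤ s := by exact_mod_cast hs
  rcases l with _ | _ | _ | l <;> simp only [cConst] <;>
    refine mul_nonneg (by positivity) (by linarith)

lemma eps3_self (i n : Fin 3) : eps3 i i n = 0 := by
  fin_cases i <;> fin_cases n <;> simp [eps3]

lemma sum_eps3_mul {i j n : Fin 3} (hij : i ≠ j) (hjn : j ≠ n) (hin : i ≠ n) (h : Fin 3 → ℝ) :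
    ∑ m, eps3 j i m * h m = eps3 j i n * h n := by
  refine Fintype.sum_eq_single n fun m hm => ?_
  have : eps3 j i m = 0 := by
    fin_cases i <;> fin_cases j <;> fin_cases n <;> fin_cases m <;>
      simp at hij hjn hin hm <;> simp [eps3]
  rw [this, zero_mul]

section

variable {s N : ℕ} {x p : Mat3}

lemma abs_sigmaK_le (hs : 6 ≤ s) (hN : 2 * s ≤ N) (hp : IsSO3 p)
    (hω : π / 2 ≤ (N + 1) * rotAngle (p.transpose * x)) :
    |sigmaK s N x p| ≤ cConst 0 s / ((N + 1) * rotAngle (p.transpose * x)) ^ s := by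
  rw [sigmaK, hp.inv_eq]
  exact abs_sigmaT_rotAngle_le hs hN hω

lemma abs_Xy_sigmaK_le (hs : 6 ≤ s) (hN : 2 * s ≤ N) (hx : IsSO3 x) (hp : IsSO3 p)
    (hω : π / 2 ≤ (N + 1) * rotAngle (p.transpose * x)) (n : Fin 3) :
    |Xy n (sigmaK s N) x p| ≤
      cConst 1 s * (N + 1) / ((N + 1) * rotAngle (p.transpose * x)) ^ s := by
  rw [(isZonalKernel_sigmaK s N).Xy_eq n hx hp, abs_neg]
  exact abs_zonalDeriv_sigmaPoly_le hs hN (hp.transpose.mul hx) hω n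

lemma abs_Xx_Xy_sigmaK_le (hs : 6 ≤ s) (hN : 2 * s ≤ N) (hx : IsSO3 x) (hp : IsSO3 p)
    (hω : π / 2 ≤ (N + 1) * rotAngle (p.transpose * x)) (i n : Fin 3) :
    |Xx i (Xy n (sigmaK s N)) x p| ≤
      cConst 2 s * (N + 1) ^ 2 / ((N + 1) * rotAngle (p.transpose * x)) ^ s := by
  rw [(isZonalKernel_sigmaK s N).Xx_Xy_eq i n hx hp, abs_neg]
  exact abs_zonalDerivTwo_sigmaPoly_le hs hN (hp.transpose.mul hx) hω i n

lemma abs_Xx_Xx_Xy_sigmaK_le (hs : 6 ≤ s) (hN : 2 * s ≤ N) (hx : IsSO3 x) (hp : IsSO3 p)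
    (hω : π / 2 ≤ (N + 1) * rotAngle (p.transpose * x)) (i n : Fin 3) :
    |Xx i (Xx i (Xy n (sigmaK s N))) x p| ≤
      1.2 * cConst 3 s * (N + 1) ^ 3 / ((N + 1) * rotAngle (p.transpose * x)) ^ s := by
  have h := abs_zonalDerivThree_sub_sigmaPoly_le hs hN (hp.transpose.mul hx) hω i i n
  simp only [eps3_self, zero_mul, Finset.sum_const_zero, zero_div, sub_zero] at h
  rwa [(isZonalKernel_sigmaK s N).Xx_Xx_Xy_eq i i n hx hp, abs_neg]

lemma abs_Xx_Xx_sub_sigmaK_le (hs : 6 ≤ s) (hN : 2 * s ≤ N) (hx : IsSO3 x) (hp : IsSO3 p)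
    (hω : π / 2 ≤ (N + 1) * rotAngle (p.transpose * x)) {i j n : Fin 3} (hij : i ≠ j)
    (hjn : j ≠ n) (hin : i ≠ n) :
    |Xx j (Xx i (sigmaK s N)) x p - eps3 j i n / 2 * Xx n (sigmaK s N) x p| ≤
      cConst 2 s * (N + 1) ^ 2 / ((N + 1) * rotAngle (p.transpose * x)) ^ s := by
  rw [(isZonalKernel_sigmaK s N).Xx_Xx_eq j i hx hp, (isZonalKernel_sigmaK s N).Xx_eq n hx hp]
  exact abs_zonalDerivTwo_sub_sigmaPoly_le hs hN (hp.transpose.mul hx) hω hij hjn hin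

lemma abs_Xx_Xx_Xy_sub_sigmaK_le (hs : 6 ≤ s) (hN : 2 * s ≤ N) (hx : IsSO3 x) (hp : IsSO3 p)
    (hω : π / 2 ≤ (N + 1) * rotAngle (p.transpose * x)) {i j n : Fin 3} (hij : i ≠ j)
    (hjn : j ≠ n) (hin : i ≠ n) (k : Fin 3) :
    |Xx j (Xx i (Xy k (sigmaK s N))) x p - eps3 j i n / 2 * Xx n (Xy k (sigmaK s N)) x p| ≤
      1.2 * cConst 3 s * (N + 1) ^ 3 / ((N + 1) * rotAngle (p.transpose * x)) ^ s := by
  have h := abs_zonalDerivThree_sub_sigmaPoly_le hs hN (hp.transpose.mul hx) hω j i k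
  rw [sum_eps3_mul hij hjn hin, mul_div_right_comm, ← abs_neg] at h
  rw [(isZonalKernel_sigmaK s N).Xx_Xx_Xy_eq j i k hx hp,
    (isZonalKernel_sigmaK s N).Xx_Xy_eq n k hx hp, mul_neg, ← neg_sub']
  exact h

end

theorem offdiagonal_sum_bounds_general
    (s N : ℕ) (hs : 6 ≤ s) (hN : 2 * s ≤ N)
    (ν : ℝ) (C : Finset Mat3) (hC : ∀ p ∈ C, IsSO3 p)
    (hsep : ∀ p ∈ C, ∀ q ∈ C, p ≠ q → ν / ((N : ℝ) + 1) ≤ rotAngle (q⁻¹ * p))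
    (xj : Mat3) (hxj : xj ∈ C)
    (ε : ℝ) (hε : ε < 1) (hεν : π / 2 ≤ (1 - ε) * ν)
    (x : Mat3) (hx : IsSO3 x) (hxd : rotAngle (xj⁻¹ * x) ≤ ε * ν / ((N : ℝ) + 1)) :
    (∑ p ∈ C.erase xj, |sigmaK s N x p|) ≤
        CConst 0 s * min ((27 / 124) * ((1 - ε) ^ s)⁻¹ + 1) (((1 - ε) ^ s)⁻¹) / ν ^ s ∧
    (∀ n : Fin 3,
      (∑ p ∈ C.erase xj, |Xy n (sigmaK s N) x p|) ≤
        CConst 1 s * min ((27 / 124) * ((1 - ε) ^ s)⁻¹ + 1) (((1 - ε) ^ s)⁻¹) *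
          ((N : ℝ) + 1) / ν ^ s) ∧
    (∀ i n : Fin 3,
      (∑ p ∈ C.erase xj, |Xx i (Xy n (sigmaK s N)) x p|) ≤
        CConst 2 s * min ((27 / 124) * ((1 - ε) ^ s)⁻¹ + 1) (((1 - ε) ^ s)⁻¹) *
          ((N : ℝ) + 1) ^ 2 / ν ^ s) ∧
    (∀ i n : Fin 3,
      (∑ p ∈ C.erase xj, |Xx i (Xx i (Xy n (sigmaK s N))) x p|) ≤
        1.2 * CConst 3 s * min ((27 / 124) * ((1 - ε) ^ s)⁻¹ + 1) (((1 - ε) ^ s)⁻¹) *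
          ((N : ℝ) + 1) ^ 3 / ν ^ s) ∧
    (∀ i j n : Fin 3, i ≠ j → j ≠ n → i ≠ n →
      ((∑ p ∈ C.erase xj,
          |Xx j (Xx i (sigmaK s N)) x p - (eps3 j i n / 2) * Xx n (sigmaK s N) x p|) ≤
        CConst 2 s * min ((27 / 124) * ((1 - ε) ^ s)⁻¹ + 1) (((1 - ε) ^ s)⁻¹) *
          ((N : ℝ) + 1) ^ 2 / ν ^ s) ∧
      ∀ k : Fin 3,
        (∑ p ∈ C.erase xj,
            |Xx j (Xx i (Xy k (sigmaK s N))) x p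
              - (eps3 j i n / 2) * Xx n (Xy k (sigmaK s N)) x p|) ≤
          1.2 * CConst 3 s * min ((27 / 124) * ((1 - ε) ^ s)⁻¹ + 1) (((1 - ε) ^ s)⁻¹) *
            ((N : ℝ) + 1) ^ 3 / ν ^ s) := by
  have hν : 0 < ν := pos_of_mul_pos_right (Real.pi_div_two_pos.trans_le hεν) (sub_nonneg.mpr hε.le)
  have hc := cConst_nonneg (s := s) (by omega)
  have key := fun (g : Mat3 → ℝ) (b : ℝ) => sum_abs_le_of_decay hC N.cast_add_one_pos hν hsep hxj
    hx hε hxd (s := s) (by omega) hεν (g := g) (b := b)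
  refine ⟨?_, fun n => ?_, fun i n => ?_, fun i n => ?_, fun i j n hij hjn hin => ⟨?_, fun k => ?_⟩⟩
  · exact (key _ _ (hc 0) fun p hp hω => abs_sigmaK_le hs hN hp hω).trans_eq (by rw [CConst])
  · exact (key _ _ (mul_nonneg (hc 1) (by positivity)) fun p hp hω =>
      abs_Xy_sigmaK_le hs hN hx hp hω n).trans_eq (by rw [CConst]; ring)
  · exact (key _ _ (mul_nonneg (hc 2) (by positivity)) fun p hp hω =>
      abs_Xx_Xy_sigmaK_le hs hN hx hp hω i n).trans_eq (by rw [CConst]; ring)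
  · exact (key _ _ (by have := hc 3; positivity) fun p hp hω =>
      abs_Xx_Xx_Xy_sigmaK_le hs hN hx hp hω i n).trans_eq (by rw [CConst]; ring)
  · exact (key _ _ (mul_nonneg (hc 2) (by positivity)) fun p hp hω =>
      abs_Xx_Xx_sub_sigmaK_le hs hN hx hp hω hij hjn hin).trans_eq (by rw [CConst]; ring)
  · exact (key _ _ (by have := hc 3; positivity) fun p hp hω =>
      abs_Xx_Xx_Xy_sub_sigmaK_le hs hN hx hp hω hij hjn hin k).trans_eq (by rw [CConst]; ring)

theorem offdiagonal_sum_bounds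
    (s N : ℕ) (hs_even : Even s) (hs : 6 ≤ s) (hN : 2 * s ≤ N)
    (ν : ℝ) (hν : π ≤ ν)
    (C : Finset Mat3) (hC : ∀ p ∈ C, IsSO3 p)
    (hsep : ∀ p ∈ C, ∀ q ∈ C, p ≠ q → ν / ((N : ℝ) + 1) ≤ rotAngle (q⁻¹ * p))
    (xj : Mat3) (hxj : xj ∈ C)
    (ε : ℝ) (hε0 : 0 ≤ ε) (hε : ε ≤ 1 / 2)
    (x : Mat3) (hx : IsSO3 x) (hxd : rotAngle (xj⁻¹ * x) ≤ ε * ν / ((N : ℝ) + 1)) :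
    (∑ p ∈ C.erase xj, |sigmaK s N x p|) ≤
        CConst 0 s * min ((27 / 124) * ((1 - ε) ^ s)⁻¹ + 1) (((1 - ε) ^ s)⁻¹) / ν ^ s ∧
    (∀ n : Fin 3,
      (∑ p ∈ C.erase xj, |Xy n (sigmaK s N) x p|) ≤
        CConst 1 s * min ((27 / 124) * ((1 - ε) ^ s)⁻¹ + 1) (((1 - ε) ^ s)⁻¹) *
          ((N : ℝ) + 1) / ν ^ s) ∧
    (∀ i n : Fin 3,
      (∑ p ∈ C.erase xj, |Xx i (Xy n (sigmaK s N)) x p|) ≤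
        CConst 2 s * min ((27 / 124) * ((1 - ε) ^ s)⁻¹ + 1) (((1 - ε) ^ s)⁻¹) *
          ((N : ℝ) + 1) ^ 2 / ν ^ s) ∧
    (∀ i n : Fin 3,
      (∑ p ∈ C.erase xj, |Xx i (Xx i (Xy n (sigmaK s N))) x p|) ≤
        1.2 * CConst 3 s * min ((27 / 124) * ((1 - ε) ^ s)⁻¹ + 1) (((1 - ε) ^ s)⁻¹) *
          ((N : ℝ) + 1) ^ 3 / ν ^ s) ∧
    (∀ i j n : Fin 3, i ≠ j → j ≠ n → i ≠ n →
      ((∑ p ∈ C.erase xj,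
          |Xx j (Xx i (sigmaK s N)) x p - (eps3 j i n / 2) * Xx n (sigmaK s N) x p|) ≤
        CConst 2 s * min ((27 / 124) * ((1 - ε) ^ s)⁻¹ + 1) (((1 - ε) ^ s)⁻¹) *
          ((N : ℝ) + 1) ^ 2 / ν ^ s) ∧
      ∀ k : Fin 3, k = i ∨ k = j ∨ k = n →
        (∑ p ∈ C.erase xj,
            |Xx j (Xx i (Xy k (sigmaK s N))) x p
              - (eps3 j i n / 2) * Xx n (Xy k (sigmaK s N)) x p|) ≤
          1.2 * CConst 3 s * min ((27 / 124) * ((1 - ε) ^ s)⁻¹ + 1) (((1 - ε) ^ s)⁻¹) *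
            ((N : ℝ) + 1) ^ 3 / ν ^ s) := by
  obtain ⟨h₀, h₁, h₂, h₃, h₄⟩ := offdiagonal_sum_bounds_general s N hs hN ν C hC hsep xj hxj ε
    (by linarith) (by nlinarith [Real.pi_pos]) x hx hxd
  exact ⟨h₀, h₁, h₂, h₃, fun i j n hij hjn hin =>
    ⟨(h₄ i j n hij hjn hin).1, fun k _ => (h₄ i j n hij hjn hin).2 k⟩⟩
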